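/- arXiv:1912.00827 — 5 statements merged into one kernel-verified Lean document; each statement's English description precedes it below -/
import Mathlib

section
/- Let σ_Z > 0, b ∈ ℝ, and let f : ℝ → ℝ be measurable with E|f(σ N + b)|^k < ∞ for all 1 ≤ k ≤ 4, all σ > 0, where N ~ N(0,1). Then there exists a constant C (depending on f, b, σ_Z) such that for all ε with |ε| < 1/10, |E[f(σ_Z √(1+ε) N + b)] − ξ₀(b) − ξ₂(b) ε| ≤ C ε², where ξ₀(b) := E[f(σ_Z N + b)] and ξ₂(b) := E[((N² − 1)/2) f(σ_Z N + b)] with N ~ N(0,1). -/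
/-!
After the rescaling `g x = f (σZ * x + b)`, the mean `E[g (√t N)]` equals
`(2π)^(-1/2) ∫ k(t, x²/2) g(x) dx` with the kernel `k(t, u) = t^(-1/2) exp(-u/t)`
(`integral_scaled_gaussian`), so the variance parameter `t = 1 + ε` sits in the smooth kernel
and no regularity of `f` is needed. The kernel is expanded to first order at `t = 1`. Its second
`t`-derivative is a quadratic polynomial in `u` times the kernel, hence it is at most a multiple
of `exp(-u/2)`, uniformly for `|t - 1| ≤ 1/10` (`varKernel_polynomial_bound`), and the
Taylor remainder is `O(ε² exp(-u/2))` (`varKernel_taylor`). With `u = x²/2`, the function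
`exp(-x²/4)` is up to a constant the Gaussian density of variance `2`, so `|g(x)| exp(-x²/4)` is
integrable by the first-moment hypothesis at `σ = √2 σZ`, and the remainder can be integrated.
-/

open MeasureTheory ProbabilityTheory

open Real

/-- The kernel `t^(-1/2) exp(-u/t)`, written as a single exponential (for `t > 0`). With
`u = x²/2` it is `√(2π)` times the density of the centred Gaussian of variance `t`. -/
noncomputable def varKernel (t u : ℝ) : ℝ := exp (-(log t) / 2 - u / t)

/-- The logarithmic derivative in `t` of `varKernel t u`. -/
noncomputable def varKernelLogDeriv (t u : ℝ) : ℝ := -t⁻¹ / 2 + u * t⁻¹ ^ 2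

lemma hasDerivAt_varKernel {t : ℝ} (ht : 0 < t) (u : ℝ) :
    HasDerivAt (fun s => varKernel s u) (varKernel t u * varKernelLogDeriv t u) t := by
  unfold varKernel varKernelLogDeriv
  have h1 := ((Real.hasDerivAt_log ht.ne').neg.div_const 2).sub
    ((hasDerivAt_inv ht.ne').const_mul u)
  have h2 := h1.exp
  refine (h2.congr_deriv ?_).congr_of_eventuallyEq (Filter.Eventually.of_forall fun s => ?_)
  · simp only [Pi.sub_apply, Pi.neg_apply, div_eq_mul_inv]
    field_simp
    ring
  · simp [div_eq_mul_inv]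

lemma hasDerivAt_varKernel_mul_logDeriv {t : ℝ} (ht : 0 < t) (u : ℝ) :
    HasDerivAt (fun s => varKernel s u * varKernelLogDeriv s u)
      (varKernel t u * (varKernelLogDeriv t u ^ 2 + (t⁻¹ ^ 2 / 2 - 2 * u * t⁻¹ ^ 3))) t := by
  have hi := hasDerivAt_inv ht.ne'
  have h1 : HasDerivAt (fun s => varKernelLogDeriv s u)
      (t⁻¹ ^ 2 / 2 - 2 * u * t⁻¹ ^ 3) t := by
    unfold varKernelLogDeriv
    refine ((hi.neg.div_const 2).add ((hi.pow 2).const_mul u)).congr_deriv ?_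
    simp only [inv_pow, pow_one, Nat.cast_ofNat, Nat.add_one_sub_one]
    field_simp
    ring
  refine ((hasDerivAt_varKernel ht u).mul h1).congr_deriv ?_
  ring

lemma varKernel_polynomial_bound {t u : ℝ} (ht : t ∈ Set.Icc (9 / 10 : ℝ) (11 / 10))
    (hu : 0 ≤ u) : (1 + u) ^ 2 * varKernel t u ≤ 100 * exp (-u / 2) := by
  obtain ⟨h1, h2⟩ := ht
  have ht0 : 0 < t := by linarith
  have hlog : 1 - t⁻¹ ≤ log t := Real.one_sub_inv_le_log_of_pos ht0
  have hinv : t⁻¹ ≤ 10 / 9 := by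
    rw [inv_le_comm₀ ht0 (by norm_num)]; norm_num; linarith
  have hinv' : 10 / 11 ≤ t⁻¹ := by
    rw [le_inv_comm₀ (by norm_num) ht0]; norm_num; linarith
  have hk : varKernel t u ≤ exp 1 * exp (-(9 / 10) * u) := by
    rw [varKernel, ← exp_add, exp_le_exp, div_eq_mul_inv u]
    nlinarith
  -- half of the decay rate `9/10 - 1/2` is what a single factor `1 + u` may cost
  have hp : 1 + u ≤ 5 * exp (u / 5) := by
    have := add_one_le_exp (u / 5)
    linarith
  have hp2 : (1 + u) ^ 2 ≤ 25 * exp (2 / 5 * u) := by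
    calc (1 + u) ^ 2 ≤ (5 * exp (u / 5)) ^ 2 := by gcongr
      _ = 25 * (exp (u / 5) * exp (u / 5)) := by ring
      _ = 25 * exp (2 / 5 * u) := by rw [← exp_add]; ring_nf
  calc (1 + u) ^ 2 * varKernel t u
      ≤ (25 * exp (2 / 5 * u)) * (exp 1 * exp (-(9 / 10) * u)) := by
        gcongr
        exact (exp_pos _).le
    _ = 25 * exp 1 * (exp (2 / 5 * u) * exp (-(9 / 10) * u)) := by ring
    _ = 25 * exp 1 * exp (-u / 2) := by rw [← exp_add]; ring_nf
    _ ≤ 100 * exp (-u / 2) := by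
        gcongr
        linarith [exp_one_lt_d9]

lemma abs_second_deriv_varKernel_le {t u : ℝ} (ht : t ∈ Set.Icc (9 / 10 : ℝ) (11 / 10))
    (hu : 0 ≤ u) :
    |varKernel t u * (varKernelLogDeriv t u ^ 2 + (t⁻¹ ^ 2 / 2 - 2 * u * t⁻¹ ^ 3))|
      ≤ 500 * exp (-u / 2) := by
  have hb := varKernel_polynomial_bound ht hu
  obtain ⟨h1, h2⟩ := ht
  have ht0 : 0 < t := by linarith
  have hinv : t⁻¹ ≤ 10 / 9 := by
    rw [inv_le_comm₀ ht0 (by norm_num)]; norm_num; linarith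
  have hi0 : 0 < t⁻¹ := inv_pos.2 ht0
  have hk0 : 0 < varKernel t u := exp_pos _
  have hr2 : t⁻¹ ^ 2 ≤ 5 / 4 :=
    (pow_le_pow_left₀ hi0.le hinv 2).trans (by norm_num)
  have hr3 : t⁻¹ ^ 3 ≤ 3 / 2 :=
    (pow_le_pow_left₀ hi0.le hinv 3).trans (by norm_num)
  have hr2p : 0 < t⁻¹ ^ 2 := by positivity
  have hr3p : 0 < t⁻¹ ^ 3 := by positivity
  have hL : varKernelLogDeriv t u ^ 2 ≤ (5 / 4 * (1 + u)) ^ 2 := by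
    rw [sq_le_sq, abs_of_pos (by positivity : 0 < 5 / 4 * (1 + u)), abs_le, varKernelLogDeriv]
    constructor <;> nlinarith
  have hur : u * t⁻¹ ^ 3 ≤ u * (3 / 2) := by gcongr
  have hur0 : 0 ≤ u * t⁻¹ ^ 3 := by positivity
  have hpoly : |varKernelLogDeriv t u ^ 2 + (t⁻¹ ^ 2 / 2 - 2 * u * t⁻¹ ^ 3)|
      ≤ 5 * (1 + u) ^ 2 := by
    rw [abs_le]
    constructor <;> nlinarith [sq_nonneg (varKernelLogDeriv t u), sq_nonneg u]
  rw [abs_mul, abs_of_pos hk0]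
  calc varKernel t u * |varKernelLogDeriv t u ^ 2 + (t⁻¹ ^ 2 / 2 - 2 * u * t⁻¹ ^ 3)|
      ≤ varKernel t u * (5 * (1 + u) ^ 2) := by gcongr
    _ ≤ 500 * exp (-u / 2) := by linarith

lemma varKernel_taylor {ε u : ℝ} (hε : |ε| < 1 / 10) (hu : 0 ≤ u) :
    |varKernel (1 + ε) u - varKernel 1 u - varKernel 1 u * (u - 1 / 2) * ε|
      ≤ 500 * exp (-u / 2) * ε ^ 2 := by
  obtain ⟨he1, he2⟩ := abs_lt.1 hε
  set M := 500 * exp (-u / 2) with hM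
  have hM0 : 0 < M := by positivity
  have hsub : Set.uIcc 1 (1 + ε) ⊆ Set.Icc (9 / 10 : ℝ) (11 / 10) :=
    Set.uIcc_subset_Icc ⟨by norm_num, by norm_num⟩ ⟨by linarith, by linarith⟩
  have hpos : ∀ s ∈ Set.uIcc 1 (1 + ε), 0 < s := fun s hs => by
    linarith [(hsub hs).1]
  have hconv := convex_uIcc (𝕜 := ℝ) (1 : ℝ) (1 + ε)
  -- the mean value inequality for the derivative, then for the function minus its tangent
  have hd : ∀ s ∈ Set.uIcc 1 (1 + ε),
      ‖varKernel s u * varKernelLogDeriv s u - varKernel 1 u * varKernelLogDeriv 1 u‖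
        ≤ M * |ε| := fun s hs => by
    have h := hconv.norm_image_sub_le_of_norm_hasDerivWithin_le
      (fun r hr => (hasDerivAt_varKernel_mul_logDeriv (hpos r hr) u).hasDerivWithinAt)
      (fun r hr => abs_second_deriv_varKernel_le (hsub hr) hu) Set.left_mem_uIcc hs
    refine h.trans ?_
    have hs' : |s - 1| ≤ |ε| := by
      simpa using Set.abs_sub_left_of_mem_uIcc hs
    rw [Real.norm_eq_abs]
    gcongr
  have h := hconv.norm_image_sub_le_of_norm_hasDerivWithin_le
    (f := fun s => varKernel s u - s * (varKernel 1 u * varKernelLogDeriv 1 u))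
    (fun r hr => (((hasDerivAt_varKernel (hpos r hr) u).sub
      ((hasDerivAt_id r).mul_const (varKernel 1 u * varKernelLogDeriv 1 u))).congr_deriv
        (by rw [one_mul])).hasDerivWithinAt)
    hd Set.left_mem_uIcc Set.right_mem_uIcc
  have hL : varKernelLogDeriv 1 u = u - 1 / 2 := by
    unfold varKernelLogDeriv
    norm_num
    ring
  rw [hL, Real.norm_eq_abs, Real.norm_eq_abs, add_sub_cancel_left, mul_assoc, abs_mul_abs_self] at h
  calc _ = |varKernel (1 + ε) u - (1 + ε) * (varKernel 1 u * (u - 1 / 2))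
        - (varKernel 1 u - 1 * (varKernel 1 u * (u - 1 / 2)))| := by
        congr 1; ring
    _ ≤ M * (ε * ε) := h
    _ = M * ε ^ 2 := by ring

lemma gaussianPDFReal_eq_varKernel {t : ℝ} (ht : 0 < t) (x : ℝ) :
    gaussianPDFReal 0 t.toNNReal x = (√(2 * π))⁻¹ * varKernel t (x ^ 2 / 2) := by
  have hs : exp (-(log t) / 2) = (√t)⁻¹ := by
    rw [neg_div, exp_neg, ← Real.log_sqrt ht.le, exp_log (Real.sqrt_pos.2 ht)]
  rw [gaussianPDFReal, varKernel, Real.coe_toNNReal t ht.le, Real.sqrt_mul (by positivity),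
    sub_eq_add_neg (-(log t) / 2), exp_add, hs, mul_inv, mul_assoc]
  congr 3
  field_simp
  ring

lemma gaussianReal_map_sqrt_mul {t : ℝ} (ht : 0 < t) :
    (gaussianReal 0 1).map (√t * ·) = gaussianReal 0 t.toNNReal := by
  rw [gaussianReal_map_const_mul, mul_zero, mul_one]
  congr 1
  ext
  simp [Real.sq_sqrt ht.le, ht.le]

lemma integral_scaled_gaussian {t : ℝ} (ht : 0 < t) {g : ℝ → ℝ} (hg : Measurable g) :
    ∫ x, g (√t * x) ∂(gaussianReal 0 1)
      = (√(2 * π))⁻¹ * ∫ x, varKernel t (x ^ 2 / 2) * g x := by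
  rw [← integral_map (φ := (√t * ·)) (by fun_prop) hg.aestronglyMeasurable,
    gaussianReal_map_sqrt_mul ht, integral_gaussianReal_eq_integral_smul (by simpa using ht),
    ← integral_const_mul]
  simp_rw [gaussianPDFReal_eq_varKernel ht, smul_eq_mul, mul_assoc]

lemma integrable_exp_mul_of_gaussian {g : ℝ → ℝ} (hg : Measurable g)
    (h : Integrable (fun x => g (√2 * x)) (gaussianReal 0 1)) :
    Integrable (fun x => exp (-(x ^ 2 / 2) / 2) * g x) := by
  have h1 : Integrable g (gaussianReal 0 (2 : ℝ).toNNReal) := by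
    rw [← gaussianReal_map_sqrt_mul two_pos]
    exact (integrable_map_measure hg.aestronglyMeasurable (by fun_prop)).2 h
  rw [gaussianReal_of_var_ne_zero _ (by simp),
    integrable_withDensity_iff_integrable_smul' (measurable_gaussianPDF _ _)
      (by simp [gaussianPDF])] at h1
  have hc : (0 : ℝ) < (√(2 * π))⁻¹ * exp (-(log 2) / 2) := by positivity
  refine (h1.const_mul ((√(2 * π))⁻¹ * exp (-(log 2) / 2))⁻¹).congr
    (Filter.Eventually.of_forall fun x => ?_)
  simp only [toReal_gaussianPDF, gaussianPDFReal_eq_varKernel two_pos, smul_eq_mul]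
  rw [inv_mul_eq_iff_eq_mul₀ hc.ne', varKernel, sub_eq_add_neg, exp_add, neg_div (2 : ℝ) (x ^ 2 / 2)]
  ring

/-- first-order Gaussian perturbation expansion of the mean.
For `f` measurable with `E|f(σN+b)|^k < ∞` for `1 ≤ k ≤ 4` and all `σ > 0`
(`N ~ N(0,1)`), there is a constant `C` such that for `|ε| < 1/10`,
`|E[f(σ_Z √(1+ε) N + b)] − ξ₀(b) − ξ₂(b) ε| ≤ C ε²`, where
`ξ₀(b) = E[f(σ_Z N + b)]` and `ξ₂(b) = E[((N²−1)/2) f(σ_Z N + b)]`. -/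
theorem gaussian_mean_perturbation_expansion
    (σZ : ℝ) (hσZ : 0 < σZ) (b : ℝ) (f : ℝ → ℝ) (hf : Measurable f)
    (hmom : ∀ σ : ℝ, 0 < σ → ∀ k : ℕ, 1 ≤ k → k ≤ 4 →
      Integrable (fun x => |f (σ * x + b)| ^ k) (gaussianReal 0 1)) :
    ∃ C : ℝ, ∀ ε : ℝ, |ε| < 1 / 10 →
      |(∫ x, f (σZ * Real.sqrt (1 + ε) * x + b) ∂(gaussianReal 0 1))
        - (∫ x, f (σZ * x + b) ∂(gaussianReal 0 1))
        - (∫ x, ((x ^ 2 - 1) / 2) * f (σZ * x + b) ∂(gaussianReal 0 1)) * ε|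
      ≤ C * ε ^ 2 := by
  set g : ℝ → ℝ := fun x => f (σZ * x + b) with hgdef
  have hg : Measurable g := by fun_prop
  set k : ℝ → ℝ → ℝ := fun t x => varKernel t (x ^ 2 / 2) with hk
  set D : ℝ → ℝ := fun x => exp (-(x ^ 2 / 2) / 2) * |g x| with hDdef
  have hD : Integrable D := by
    refine integrable_exp_mul_of_gaussian (g := fun x => |g x|) (by fun_prop) ?_
    refine (hmom (σZ * √2) (by positivity) 1 le_rfl (by norm_num)).congr
      (Filter.Eventually.of_forall fun x => ?_)
    simp only [hgdef, pow_one, mul_assoc]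
  have hkm : ∀ t, Measurable (k t) := fun t => by
    simp only [hk, varKernel]
    fun_prop
  have hkint : ∀ t ∈ Set.Icc (9 / 10 : ℝ) (11 / 10), ∀ p : ℝ → ℝ, Measurable p →
      (∀ x, |p x| ≤ (1 + x ^ 2 / 2) ^ 2) → Integrable (fun x => k t x * p x * g x) := by
    intro t ht p hp hpb
    refine (hD.const_mul 100).mono'
      (((hkm t).mul hp).mul hg).aestronglyMeasurable (Filter.Eventually.of_forall fun x => ?_)
    have hkp : 0 < k t x := exp_pos _
    have hb := varKernel_polynomial_bound ht (u := x ^ 2 / 2) (by positivity)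
    rw [Real.norm_eq_abs, abs_mul, abs_mul, abs_of_pos hkp]
    calc k t x * |p x| * |g x| ≤ k t x * (1 + x ^ 2 / 2) ^ 2 * |g x| := by
          gcongr
          exact hpb x
      _ ≤ (100 * exp (-(x ^ 2 / 2) / 2)) * |g x| := by
          refine mul_le_mul_of_nonneg_right ?_ (abs_nonneg _)
          rw [mul_comm]
          exact hb
      _ = 100 * D x := by simp only [hDdef]; ring
  have hkint1 : ∀ t ∈ Set.Icc (9 / 10 : ℝ) (11 / 10), Integrable (fun x => k t x * g x) := by
    intro t ht
    simpa using hkint t ht (fun _ => 1) measurable_const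
      (fun x => by rw [abs_one]; nlinarith [sq_nonneg x])
  have h1mem : (1 : ℝ) ∈ Set.Icc (9 / 10 : ℝ) (11 / 10) := ⟨by norm_num, by norm_num⟩
  have hkint2 : Integrable (fun x => k 1 x * (x ^ 2 / 2 - 1 / 2) * g x) :=
    hkint 1 h1mem _ (by fun_prop) (fun x => by
      rw [abs_le]; constructor <;> nlinarith [sq_nonneg x, sq_nonneg (x ^ 2)])
  set c : ℝ := (√(2 * π))⁻¹ with hc
  have hc0 : 0 < c := by positivity
  have e0 : ∫ x, f (σZ * x + b) ∂(gaussianReal 0 1) = c * ∫ x, k 1 x * g x := by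
    have h := integral_scaled_gaussian one_pos hg
    simp only [Real.sqrt_one, one_mul] at h
    exact h
  have e2 : ∫ x, ((x ^ 2 - 1) / 2) * f (σZ * x + b) ∂(gaussianReal 0 1)
      = c * ∫ x, k 1 x * (x ^ 2 / 2 - 1 / 2) * g x := by
    have h := integral_scaled_gaussian one_pos (g := fun x => ((x ^ 2 - 1) / 2) * g x)
      (by fun_prop)
    simp only [Real.sqrt_one, one_mul] at h
    rw [h]
    congr 2
    funext x
    ring
  refine ⟨c * (500 * ∫ x, D x), fun ε hε => ?_⟩
  obtain ⟨he1, he2⟩ := abs_lt.1 hε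
  have htmem : 1 + ε ∈ Set.Icc (9 / 10 : ℝ) (11 / 10) := ⟨by linarith, by linarith⟩
  have e1 : ∫ x, f (σZ * √(1 + ε) * x + b) ∂(gaussianReal 0 1)
      = c * ∫ x, k (1 + ε) x * g x := by
    rw [← integral_scaled_gaussian (by linarith) hg]
    simp only [hgdef, mul_assoc]
  rw [e0, e1, e2]
  have hcomb : (∫ x, k (1 + ε) x * g x) - (∫ x, k 1 x * g x)
      - (∫ x, k 1 x * (x ^ 2 / 2 - 1 / 2) * g x) * ε
      = ∫ x, (k (1 + ε) x - k 1 x - k 1 x * (x ^ 2 / 2 - 1 / 2) * ε) * g x := by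
    rw [← integral_mul_const, ← integral_sub (hkint1 _ htmem) (hkint1 _ h1mem),
      ← integral_sub (by exact (hkint1 _ htmem).sub (hkint1 _ h1mem)) (hkint2.mul_const ε)]
    congr 1
    funext x
    ring
  have hbound : |∫ x, (k (1 + ε) x - k 1 x - k 1 x * (x ^ 2 / 2 - 1 / 2) * ε) * g x|
      ≤ ∫ x, 500 * ε ^ 2 * D x := by
    rw [← Real.norm_eq_abs]
    refine norm_integral_le_of_norm_le (hD.const_mul _) (Filter.Eventually.of_forall fun x => ?_)
    rw [Real.norm_eq_abs, abs_mul]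
    calc _ ≤ 500 * exp (-(x ^ 2 / 2) / 2) * ε ^ 2 * |g x| := by
          gcongr
          exact varKernel_taylor hε (by positivity)
      _ = 500 * ε ^ 2 * D x := by simp only [hDdef]; ring
  rw [integral_const_mul] at hbound
  rw [mul_assoc c, ← mul_sub, ← mul_sub, hcomb, abs_mul, abs_of_pos hc0]
  calc _ ≤ c * (500 * ε ^ 2 * ∫ x, D x) := by gcongr
    _ = c * (500 * ∫ x, D x) * ε ^ 2 := by ring
end

section
/- Let σ_Z > 0, b ∈ ℝ, and let f : ℝ → ℝ be measurable with E|f(σ N + b)|^k < ∞ for all 1 ≤ k ≤ 4, all σ > 0, where N ~ N(0,1). Then there exists a constant C (depending on f, b, σ_Z) such that for all ε with |ε| < 1/10, |E[f(σ_Z √(1+ε) N + b)²] − η(b) − η₂(b) ε| ≤ C ε², where η(b) := E[f(σ_Z N + b)²] and η₂(b) := E[((N² − 1)/2) f(σ_Z N + b)²] with N ~ N(0,1). -/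
/-!
The law of `ρ N` has density `ρ⁻¹ exp ((1 - ρ⁻²) x² / 2)` with respect to the law of `N`
(`dilationWeight`), so with `g x = f (σZ x + b) ^ 2` and `ρ = √(1 + ε)` one has
`E[g (ρ N)] = E[w_ε(N) g(N)]`, where `w_ε(x) = (1 + ε)^(-1/2) exp (ε / (1 + ε) · x² / 2)`.
The dependence on `ε` now sits entirely in the smooth weight, so no regularity of `f` is needed.
The first-order expansion of the weight is `1 + ε (x² - 1) / 2`, with a remainder at most
`100 ε² exp (3 x² / 8)` for `|ε| < 1 / 10` (`abs_dilationWeight_sub_le`). The dominating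
function `exp (3 x² / 8) g(x)` is Gaussian-integrable, because `exp (3 x² / 8)` is twice the weight
for `ρ = 2` and `g (2 N)` is integrable by the moment hypothesis at scale `2 σZ`.
-/

open MeasureTheory ProbabilityTheory

/-- The density of the law of `ρ N` with respect to the law of `N`, for `N` standard Gaussian. -/
noncomputable def dilationWeight (ρ x : ℝ) : ℝ :=
  ρ⁻¹ * Real.exp ((1 - ρ⁻¹ ^ 2) * (x ^ 2 / 2))

lemma gaussianPDFReal_eq_dilationWeight {ρ : ℝ} (hρ : 0 < ρ) (x : ℝ) :
    gaussianPDFReal 0 1 x = ρ * (gaussianPDFReal 0 1 (ρ * x) * dilationWeight ρ (ρ * x)) := by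
  have h : Real.exp (-(x - 0) ^ 2 / (2 * ((1 : NNReal) : ℝ))) =
      Real.exp (-(ρ * x - 0) ^ 2 / (2 * ((1 : NNReal) : ℝ))) *
        Real.exp ((1 - ρ⁻¹ ^ 2) * ((ρ * x) ^ 2 / 2)) := by
    rw [← Real.exp_add]
    congr 1
    push_cast
    field_simp
    ring
  unfold gaussianPDFReal dilationWeight
  rw [h]
  field_simp

lemma integral_gaussianReal_comp_mul {ρ : ℝ} (hρ : 0 < ρ) (g : ℝ → ℝ) :
    ∫ x, g (ρ * x) ∂(gaussianReal 0 1) = ∫ x, dilationWeight ρ x * g x ∂(gaussianReal 0 1) := by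
  rw [integral_gaussianReal_eq_integral_smul one_ne_zero,
    integral_gaussianReal_eq_integral_smul one_ne_zero]
  have h := Measure.integral_comp_mul_left
    (fun z => ρ * (gaussianPDFReal 0 1 z * dilationWeight ρ z) * g z) ρ
  simp only [← gaussianPDFReal_eq_dilationWeight hρ] at h
  simp only [smul_eq_mul] at h ⊢
  rw [h, abs_of_pos (inv_pos.2 hρ), ← integral_const_mul]
  congr 1
  ext x
  field_simp

lemma integrable_gaussianReal_iff (g : ℝ → ℝ) :
    Integrable g (gaussianReal 0 1) ↔ Integrable (fun x => gaussianPDFReal 0 1 x * g x) := by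
  rw [gaussianReal_of_var_ne_zero 0 one_ne_zero,
    integrable_withDensity_iff_integrable_smul' (measurable_gaussianPDF 0 1)
      (ae_of_all _ fun _ => gaussianPDF_lt_top)]
  simp only [toReal_gaussianPDF, smul_eq_mul]

lemma integrable_dilationWeight_mul {ρ : ℝ} (hρ : 0 < ρ) {g : ℝ → ℝ}
    (hg : Integrable (fun x => g (ρ * x)) (gaussianReal 0 1)) :
    Integrable (fun x => dilationWeight ρ x * g x) (gaussianReal 0 1) := by
  rw [integrable_gaussianReal_iff] at hg ⊢
  have h := integrable_comp_mul_left_iff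
    (fun z => ρ * (gaussianPDFReal 0 1 z * dilationWeight ρ z) * g z) hρ.ne'
  simp only [← gaussianPDFReal_eq_dilationWeight hρ] at h
  refine ((h.1 hg).const_mul ρ⁻¹).congr (ae_of_all _ fun x => ?_)
  simp only
  field_simp

lemma abs_exp_sub_one_sub_le (t : ℝ) :
    |Real.exp t - 1 - t| ≤ |t| ^ 2 * Real.exp |t| := by
  have h := Complex.norm_exp_sub_sum_le_norm_mul_exp (t : ℂ) 2
  simp only [Finset.sum_range_succ, Finset.sum_range_zero, Complex.norm_real] at h
  have e : Complex.exp t - (0 + (t : ℂ) ^ 0 / (Nat.factorial 0 : ℂ)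
      + (t : ℂ) ^ 1 / (Nat.factorial 1 : ℂ)) = ((Real.exp t - 1 - t : ℝ) : ℂ) := by
    push_cast
    simp
    ring
  rw [e, Complex.norm_real] at h
  simpa using h

/-- Uniform second-order remainder for the weight at `ρ = √(1 + ε)`. -/
lemma abs_dilationWeight_sub_le {ε : ℝ} (hε : |ε| < 1 / 10) (x : ℝ) :
    |dilationWeight (Real.sqrt (1 + ε)) x - 1 - (x ^ 2 - 1) / 2 * ε|
      ≤ 100 * ε ^ 2 * Real.exp (3 / 4 * (x ^ 2 / 2)) := by
  obtain ⟨h1, h2⟩ := abs_lt.1 hε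
  unfold dilationWeight
  have hpos : 0 < Real.sqrt (1 + ε) := Real.sqrt_pos.2 (by linarith)
  have hr0 : 0 < (Real.sqrt (1 + ε))⁻¹ := inv_pos.2 hpos
  have hr2 : (Real.sqrt (1 + ε))⁻¹ ^ 2 * (1 + ε) = 1 := by
    rw [inv_pow, Real.sq_sqrt (by linarith)]
    exact inv_mul_cancel₀ (by linarith)
  generalize (Real.sqrt (1 + ε))⁻¹ = r at *
  have hy : 0 ≤ x ^ 2 / 2 := by positivity
  rw [show (x ^ 2 - 1) / 2 = x ^ 2 / 2 - 1 / 2 by ring]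
  generalize x ^ 2 / 2 = y at *
  -- `u = ε / (1 + ε)`
  obtain ⟨u, hu⟩ : ∃ u, u = 1 - r ^ 2 := ⟨_, rfl⟩
  rw [← hu]
  have huε : u * (1 + ε) = ε := by rw [hu]; linarith
  have hu_abs : |u| ≤ 10 / 9 * |ε| := by
    have : |u| * (1 + ε) = |ε| := by
      rw [← abs_of_pos (show 0 < 1 + ε by linarith), ← abs_mul, huε]
    nlinarith [abs_nonneg u]
  have hu9 : |u| ≤ 1 / 9 := by linarith
  have hu1 := abs_le.1 hu9
  have husq : u ^ 2 ≤ 5 / 4 * ε ^ 2 := by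
    rw [← sq_abs u, ← sq_abs ε]
    nlinarith [abs_nonneg u, abs_nonneg ε]
  have hrle : r ≤ 10 / 9 := by nlinarith
  obtain ⟨D, hD⟩ : ∃ D, D = Real.exp (y / 4) := ⟨_, rfl⟩
  have hD1 : 1 ≤ D := by rw [hD]; exact Real.one_le_exp (by linarith)
  have hDy : y ≤ 4 * D := by
    have := Real.add_one_le_exp (y / 4)
    rw [hD]; linarith
  have hDy2 : y ^ 2 ≤ 32 * D := by
    have := Real.quadratic_le_exp_of_nonneg (show 0 ≤ y / 4 by linarith)
    rw [hD]; nlinarith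
  have hD3 : Real.exp (3 / 4 * y) = D ^ 3 := by
    rw [hD, ← Real.exp_nat_mul]; congr 1; push_cast; ring
  rw [hD3]
  have hDD : D ≤ D ^ 3 := by nlinarith [mul_nonneg (sub_nonneg.2 hD1) (sub_nonneg.2 hD1)]
  have hDD2 : D * D ≤ D ^ 3 := by nlinarith [mul_nonneg (sub_nonneg.2 hD1) (sub_nonneg.2 hD1)]
  have hE : |Real.exp (u * y) - 1 - u * y| ≤ 40 * ε ^ 2 * D ^ 3 := by
    refine (abs_exp_sub_one_sub_le (u * y)).trans ?_
    have h3 : Real.exp |u * y| ≤ D := by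
      rw [hD, abs_mul, abs_of_nonneg hy]
      exact Real.exp_le_exp.2 (by nlinarith)
    have h4 : |u * y| ^ 2 ≤ 5 / 4 * ε ^ 2 * (32 * D) := by
      rw [sq_abs, mul_pow]
      gcongr
    calc |u * y| ^ 2 * Real.exp |u * y| ≤ (5 / 4 * ε ^ 2 * (32 * D)) * D := by gcongr
      _ = 40 * ε ^ 2 * (D * D) := by ring
      _ ≤ _ := by gcongr
  -- `r - 1 + u / 2 = -(1 - r) ^ 2 / 2`, and `(1 - r) (1 + r) = u`
  have hr : |r - 1 + u / 2| ≤ ε ^ 2 := by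
    have h5 : (1 - r) ^ 2 ≤ u ^ 2 := by
      have : u = (1 - r) * (1 + r) := by rw [hu]; ring
      rw [this, mul_pow]
      nlinarith [sq_nonneg (1 - r), sq_nonneg r]
    have h6 : r - 1 + u / 2 = -((1 - r) ^ 2 / 2) := by rw [hu]; ring
    rw [h6, abs_neg, abs_of_nonneg (by positivity)]
    nlinarith [sq_nonneg ε]
  have key : r * Real.exp (u * y) - 1 - (y - 1 / 2) * ε
      = r * (Real.exp (u * y) - 1 - u * y) + (r - 1 + u / 2) * (1 + u * y)
        - u ^ 2 * (y / 2) - (ε * u) * (y - 1 / 2) := by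
    linear_combination (y - 1 / 2) * huε
  rw [key]
  have t1 : |r * (Real.exp (u * y) - 1 - u * y)| ≤ 10 / 9 * (40 * ε ^ 2 * D ^ 3) := by
    rw [abs_mul, abs_of_pos hr0]
    gcongr
  have t2 : |(r - 1 + u / 2) * (1 + u * y)| ≤ ε ^ 2 * (5 * D ^ 3) := by
    rw [abs_mul]
    gcongr
    have h7 : u * y ≤ 1 / 9 * y := mul_le_mul_of_nonneg_right hu1.2 hy
    have h8 : -(1 / 9) * y ≤ u * y := mul_le_mul_of_nonneg_right (by linarith [hu1.1]) hy
    rw [abs_le]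
    constructor <;> linarith
  have t3 : |u ^ 2 * (y / 2)| ≤ 5 / 4 * ε ^ 2 * (2 * D ^ 3) := by
    rw [abs_of_nonneg (by positivity)]
    gcongr
    linarith
  have t4 : |(ε * u) * (y - 1 / 2)| ≤ 10 / 9 * ε ^ 2 * (5 * D ^ 3) := by
    rw [abs_mul]
    gcongr
    · rw [abs_mul, ← sq_abs ε]
      calc |ε| * |u| ≤ |ε| * (10 / 9 * |ε|) := by gcongr
        _ = 10 / 9 * |ε| ^ 2 := by ring
    · rw [abs_le]
      constructor <;> linarith
  have hP : 0 ≤ ε ^ 2 * D ^ 3 := by positivity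
  obtain ⟨a1, b1⟩ := abs_le.1 t1
  obtain ⟨a2, b2⟩ := abs_le.1 t2
  obtain ⟨a3, b3⟩ := abs_le.1 t3
  obtain ⟨a4, b4⟩ := abs_le.1 t4
  rw [abs_le]
  constructor <;> linarith

/-- first-order Gaussian perturbation expansion of the second moment.
For `f` measurable with `E|f(σN+b)|^k < ∞` for `1 ≤ k ≤ 4` and all `σ > 0`
(`N ~ N(0,1)`), there is a constant `C` such that for `|ε| < 1/10`,
`|E[f(σ_Z √(1+ε) N + b)²] − η(b) − η₂(b) ε| ≤ C ε²`, where
`η(b) = E[f(σ_Z N + b)²]` and `η₂(b) = E[((N²−1)/2) f(σ_Z N + b)²]`. -/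
theorem gaussian_second_moment_perturbation_expansion
    (σZ : ℝ) (hσZ : 0 < σZ) (b : ℝ) (f : ℝ → ℝ) (hf : Measurable f)
    (hmom : ∀ σ : ℝ, 0 < σ → ∀ k : ℕ, 1 ≤ k → k ≤ 4 →
      Integrable (fun x => |f (σ * x + b)| ^ k) (gaussianReal 0 1)) :
    ∃ C : ℝ, ∀ ε : ℝ, |ε| < 1 / 10 →
      |(∫ x, (f (σZ * Real.sqrt (1 + ε) * x + b)) ^ 2 ∂(gaussianReal 0 1))
        - (∫ x, (f (σZ * x + b)) ^ 2 ∂(gaussianReal 0 1))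
        - (∫ x, ((x ^ 2 - 1) / 2) * (f (σZ * x + b)) ^ 2 ∂(gaussianReal 0 1)) * ε|
      ≤ C * ε ^ 2 := by
  obtain ⟨g, hg⟩ : ∃ g : ℝ → ℝ, g = fun x => f (σZ * x + b) ^ 2 := ⟨_, rfl⟩
  have hg0 : ∀ x, 0 ≤ g x := fun x => by rw [hg]; positivity
  have hgm : Measurable g := by rw [hg]; fun_prop
  have hscale : ∀ ρ : ℝ, 0 < ρ → Integrable (fun x => g (ρ * x)) (gaussianReal 0 1) := by
    intro ρ hρ
    have h := hmom (σZ * ρ) (mul_pos hσZ hρ) 2 (by norm_num) (by norm_num)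
    simpa only [hg, sq_abs, mul_assoc] using h
  have hgi : Integrable g (gaussianReal 0 1) := by simpa using hscale 1 one_pos
  have hM : Integrable (fun x => Real.exp (3 / 4 * (x ^ 2 / 2)) * g x) (gaussianReal 0 1) := by
    refine ((integrable_dilationWeight_mul two_pos (hscale 2 two_pos)).const_mul 2).congr
      (ae_of_all _ fun x => ?_)
    simp only [dilationWeight]
    norm_num
    ring
  have hq : Integrable (fun x => (x ^ 2 - 1) / 2 * g x) (gaussianReal 0 1) := by
    refine (hM.const_mul 2).mono' (by fun_prop) (ae_of_all _ fun x => ?_)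
    rw [Real.norm_eq_abs, abs_mul, abs_of_nonneg (hg0 x), ← mul_assoc]
    refine mul_le_mul_of_nonneg_right ?_ (hg0 x)
    have h := Real.add_one_le_exp (3 / 4 * (x ^ 2 / 2))
    rw [abs_le]
    constructor <;> nlinarith [sq_nonneg x]
  refine ⟨100 * ∫ x, Real.exp (3 / 4 * (x ^ 2 / 2)) * g x ∂(gaussianReal 0 1), fun ε hε => ?_⟩
  have hρ : 0 < Real.sqrt (1 + ε) := Real.sqrt_pos.2 (by linarith [(abs_lt.1 hε).1])
  have hw := integrable_dilationWeight_mul hρ (hscale _ hρ)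
  have e1 : (∫ x, (f (σZ * Real.sqrt (1 + ε) * x + b)) ^ 2 ∂(gaussianReal 0 1))
      = ∫ x, dilationWeight (Real.sqrt (1 + ε)) x * g x ∂(gaussianReal 0 1) := by
    rw [← integral_gaussianReal_comp_mul hρ]
    simp only [hg, mul_assoc]
  have e2 : (∫ x, (f (σZ * x + b)) ^ 2 ∂(gaussianReal 0 1)) = ∫ x, g x ∂(gaussianReal 0 1) := by
    rw [hg]
  have e3 : (∫ x, ((x ^ 2 - 1) / 2) * (f (σZ * x + b)) ^ 2 ∂(gaussianReal 0 1))
      = ∫ x, (x ^ 2 - 1) / 2 * g x ∂(gaussianReal 0 1) := by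
    rw [hg]
  rw [e1, e2, e3, ← integral_mul_const, ← integral_sub hw hgi,
    ← integral_sub (f := fun x => dilationWeight (Real.sqrt (1 + ε)) x * g x - g x)
      (hw.sub hgi) (hq.mul_const ε), ← Real.norm_eq_abs]
  calc _ ≤ ∫ x, 100 * ε ^ 2 * (Real.exp (3 / 4 * (x ^ 2 / 2)) * g x) ∂(gaussianReal 0 1) := by
        refine norm_integral_le_of_norm_le (hM.const_mul _) (ae_of_all _ fun x => ?_)
        rw [Real.norm_eq_abs, show dilationWeight (Real.sqrt (1 + ε)) x * g x - g x
            - (x ^ 2 - 1) / 2 * g x * ε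
            = (dilationWeight (Real.sqrt (1 + ε)) x - 1 - (x ^ 2 - 1) / 2 * ε) * g x by ring,
          abs_mul, abs_of_nonneg (hg0 x), ← mul_assoc]
        exact mul_le_mul_of_nonneg_right (abs_dilationWeight_sub_le hε x) (hg0 x)
    _ = _ := by rw [integral_const_mul]; ring
end

section
/- Let γ > 0, F ∈ ℝ^{n1×m} and X ∈ ℝ^{n0×m} be fixed matrices, and let Y = A X + ε where A ∈ ℝ^{n2×n0} is random with E[Aᵀ A] = (n2/n0) σ_A² I_{n0} and ε ∈ ℝ^{n2×m} has iid N(0, σ_ε²) entries independent of A. With G(γ) := (FᵀF/n1 + γ I_m)^{−1} and W2* := (1/n1) Y G(γ) Fᵀ, the expected training error satisfies exactly: E_{A,ε}[ (1/(n2 m)) ‖Y − W2* F‖_F² ] = γ² σ_A² (1/(n0 m)) tr( Xᵀ X G(γ)² ) + γ² σ_ε² (1/m) tr( G(γ)² ). -/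
/-!
With `K = FᵀF / n1 + γ I`, which is positive definite, `G = K⁻¹` is symmetric and
`G FᵀF / n1 = I - γ G`, so the residual `Y - W2* F` collapses to `γ Y G`
(`residual_eq`). Expanding `Y = A X + ε` and using cyclicity of the trace,
`‖Y G‖_F²` is a sum of three terms `tr (M N)`, where `N` is deterministic and `M` is one of the
random matrices `Aᵀ A`, `Aᵀ ε`, `εᵀ ε` (`frobSq_expand`). The expectation passes through such a
trace entrywise (`integral_trace_mul`), and the three second moment matrices are
`(n2 / n0) σ_A² I`, `0` and `n2 σ_ε² I`.

The Gaussian moments are read off from the joint law. The noise is not assumed measurable; its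
a.e. measurability follows because a map that is not a.e. measurable would push `P` forward to the
zero measure, whereas the joint law is a probability measure.
-/

open Matrix MeasureTheory ProbabilityTheory

/-- Squared Frobenius norm of a real matrix. -/
def frobSq {p q : ℕ} (A : Matrix (Fin p) (Fin q) ℝ) : ℝ := ∑ i, ∑ j, (A i j) ^ 2

lemma frobSq_eq_trace {p q : ℕ} (M : Matrix (Fin p) (Fin q) ℝ) :
    frobSq M = trace (M * Mᵀ) := by
  simp [frobSq, trace, Matrix.mul_apply, pow_two]

lemma frobSq_smul {p q : ℕ} (c : ℝ) (M : Matrix (Fin p) (Fin q) ℝ) :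
    frobSq (c • M) = c ^ 2 * frobSq M := by
  simp [frobSq, mul_pow, Finset.mul_sum]

lemma frobSq_expand {n2 n0 m : ℕ} (A : Matrix (Fin n2) (Fin n0) ℝ)
    (E : Matrix (Fin n2) (Fin m) ℝ) (B : Matrix (Fin n0) (Fin m) ℝ)
    (G : Matrix (Fin m) (Fin m) ℝ) :
    frobSq (A * B + E * G) = trace (Aᵀ * A * (B * Bᵀ)) + 2 * trace (Aᵀ * E * (G * Bᵀ))
      + trace (Eᵀ * E * (G * Gᵀ)) := by
  have h1 : trace (A * B * (Bᵀ * Aᵀ)) = trace (Aᵀ * A * (B * Bᵀ)) := by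
    rw [← Matrix.mul_assoc, trace_mul_comm]; simp only [Matrix.mul_assoc]
  have h2 : trace (E * G * (Bᵀ * Aᵀ)) = trace (Aᵀ * E * (G * Bᵀ)) := by
    rw [← Matrix.mul_assoc, trace_mul_comm]; simp only [Matrix.mul_assoc]
  have h3 : trace (A * B * (Gᵀ * Eᵀ)) = trace (E * G * (Bᵀ * Aᵀ)) := by
    rw [← trace_transpose]; simp only [transpose_mul, transpose_transpose]
  have h4 : trace (E * G * (Gᵀ * Eᵀ)) = trace (Eᵀ * E * (G * Gᵀ)) := by
    rw [← Matrix.mul_assoc, trace_mul_comm]; simp only [Matrix.mul_assoc]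
  rw [frobSq_eq_trace]
  simp only [transpose_add, transpose_mul, Matrix.add_mul, Matrix.mul_add, trace_add]
  rw [h1, h3, h2, h4]
  ring

/-- Both symmetry of the resolvent and the collapse of the residual to `γ Y G` come from the
positive definite matrix that `G` inverts. -/
lemma residual_eq {n1 m n2 : ℕ} {γ : ℝ} (hγ : 0 < γ) (F : Matrix (Fin n1) (Fin m) ℝ)
    (G : Matrix (Fin m) (Fin m) ℝ)
    (hG : G = ((n1 : ℝ)⁻¹ • (Fᵀ * F) + γ • (1 : Matrix (Fin m) (Fin m) ℝ))⁻¹) :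
    Gᵀ = G ∧ ∀ Y : Matrix (Fin n2) (Fin m) ℝ,
      Y - ((n1 : ℝ)⁻¹ • (Y * G * Fᵀ)) * F = γ • (Y * G) := by
  set K := (n1 : ℝ)⁻¹ • (Fᵀ * F) + γ • (1 : Matrix (Fin m) (Fin m) ℝ) with hK
  have hpd : K.PosDef := by
    have h1 : (γ • (1 : Matrix (Fin m) (Fin m) ℝ)).PosDef := Matrix.PosDef.one.smul hγ
    have h2 : ((n1 : ℝ)⁻¹ • (Fᵀ * F)).PosSemidef := by
      have := posSemidef_conjTranspose_mul_self F
      rw [conjTranspose_eq_transpose_of_trivial] at this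
      exact this.smul (by positivity)
    exact Matrix.PosDef.posSemidef_add h2 h1
  have hGK : G * K = 1 := by
    rw [hG]
    exact Matrix.nonsing_inv_mul _ ((Matrix.isUnit_iff_isUnit_det _).1 hpd.isUnit)
  refine ⟨?_, fun Y => ?_⟩
  · rw [hG, transpose_nonsing_inv]
    simp [hK]
  · have hF : (n1 : ℝ)⁻¹ • (Fᵀ * F) = K - γ • 1 := by rw [hK]; abel
    have : ((n1 : ℝ)⁻¹ • (Y * G * Fᵀ)) * F = Y * (G * ((n1 : ℝ)⁻¹ • (Fᵀ * F))) := by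
      simp only [Matrix.smul_mul, Matrix.mul_smul, Matrix.mul_assoc]
    rw [this, hF, Matrix.mul_sub, hGK]
    simp [Matrix.mul_sub]

lemma integrable_trace_mul {Ω : Type} [MeasurableSpace Ω] {P : Measure Ω} {p q : ℕ}
    (M : Ω → Matrix (Fin p) (Fin q) ℝ) (N : Matrix (Fin q) (Fin p) ℝ)
    (hM : ∀ i j, Integrable (fun ω => M ω i j) P) :
    Integrable (fun ω => trace (M ω * N)) P := by
  simp only [trace, Matrix.diag, Matrix.mul_apply]
  exact integrable_finsetSum _ fun i _ => integrable_finsetSum _ fun j _ =>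
    (hM i j).mul_const _

lemma integral_trace_mul {Ω : Type} [MeasurableSpace Ω] {P : Measure Ω} {p q : ℕ}
    (M : Ω → Matrix (Fin p) (Fin q) ℝ) (N : Matrix (Fin q) (Fin p) ℝ)
    (C : Matrix (Fin p) (Fin q) ℝ)
    (hM : ∀ i j, Integrable (fun ω => M ω i j) P) (hC : ∀ i j, ∫ ω, M ω i j ∂P = C i j) :
    ∫ ω, trace (M ω * N) ∂P = trace (C * N) := by
  simp only [trace, Matrix.diag, Matrix.mul_apply]
  rw [integral_finsetSum _ fun i _ => integrable_finsetSum _ fun j _ => (hM i j).mul_const _]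
  refine Finset.sum_congr rfl fun i _ => ?_
  rw [integral_finsetSum _ fun j _ => (hM i j).mul_const _]
  refine Finset.sum_congr rfl fun j _ => ?_
  rw [integral_mul_const, hC]

/-- Coordinates of a finite product of centred Gaussians of variance `v` are square integrable,
centred, uncorrelated and of second moment `v`. -/
lemma pi_gaussian_moments {ι : Type} [Fintype ι] [DecidableEq ι] (v : NNReal) :
    (∀ p, MemLp (fun x : ι → ℝ => x p) 2 (Measure.pi fun _ : ι => gaussianReal 0 v)) ∧
    (∀ p, ∫ x : ι → ℝ, x p ∂(Measure.pi fun _ : ι => gaussianReal 0 v) = 0) ∧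
    (∀ p q, ∫ x : ι → ℝ, x p * x q ∂(Measure.pi fun _ : ι => gaussianReal 0 v)
      = if p = q then (v : ℝ) else 0) := by
  have hmp : ∀ p : ι, MeasurePreserving (fun x : ι → ℝ => x p)
      (Measure.pi fun _ : ι => gaussianReal 0 v) (gaussianReal 0 v) :=
    fun p => measurePreserving_eval (fun _ : ι => gaussianReal 0 v) p
  have hint : ∀ p, ∫ x : ι → ℝ, x p ∂(Measure.pi fun _ : ι => gaussianReal 0 v) = 0 := by
    intro p
    have := integral_map (μ := Measure.pi fun _ : ι => gaussianReal 0 v)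
      (φ := fun x : ι → ℝ => x p) (hmp p).measurable.aemeasurable
      (f := fun y : ℝ => y) (by fun_prop)
    rw [← this, (hmp p).map_eq, integral_id_gaussianReal]
  refine ⟨fun p => ?_, hint, fun p q => ?_⟩
  · exact (memLp_id_gaussianReal' (μ := 0) (v := v) 2 (by simp)).comp_measurePreserving (hmp p)
  · split_ifs with h
    · subst h
      have := integral_map (μ := Measure.pi fun _ : ι => gaussianReal 0 v)
        (φ := fun x : ι → ℝ => x p) (hmp p).measurable.aemeasurable
        (f := fun y : ℝ => y * y) (by fun_prop)
      rw [← this, (hmp p).map_eq]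
      have hv := variance_fun_id_gaussianReal (μ := 0) (v := v)
      rw [variance_of_integral_eq_zero (by fun_prop) integral_id_gaussianReal] at hv
      simpa only [pow_two] using hv
    · have hi : iIndepFun (fun (i : ι) (ω : ι → ℝ) => ω i)
          (Measure.pi fun _ : ι => gaussianReal 0 v) :=
        iIndepFun_pi (X := fun _ y => y) (fun _ => by fun_prop)
      rw [(hi.indepFun h).integral_fun_mul_eq_mul_integral
        (measurable_pi_apply p).aestronglyMeasurable (measurable_pi_apply q).aestronglyMeasurable]
      simp [hint]

/-- with `Y = A X + ε`, `E[AᵀA] = (n2/n0) σ_A² I`, `ε` with iid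
`N(0, σ_ε²)` entries independent of `A`, `G(γ) = (FᵀF/n1 + γ I)⁻¹` and
`W2* = (1/n1) Y G(γ) Fᵀ`, the expected training error satisfies exactly
`E[(1/(n2 m)) ‖Y − W2* F‖_F²] = γ² σ_A² (1/(n0 m)) tr(XᵀX G²) + γ² σ_ε² (1/m) tr(G²)`. -/
theorem expected_training_error_identity
    (n0 n1 m n2 : ℕ) (hn0 : 0 < n0) (hn1 : 0 < n1) (hm : 0 < m) (hn2 : 0 < n2)
    (γ : ℝ) (hγ : 0 < γ) (σA σε : ℝ)
    (F : Matrix (Fin n1) (Fin m) ℝ) (X : Matrix (Fin n0) (Fin m) ℝ)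
    (Ω : Type) [MeasurableSpace Ω] (P : Measure Ω) [IsProbabilityMeasure P]
    (A : Ω → (Fin n2 → Fin n0 → ℝ)) (ε : Ω → (Fin n2 → Fin m → ℝ))
    (hAmeas : Measurable fun ω => (fun p : Fin n2 × Fin n0 => A ω p.1 p.2))
    -- second moment assumption on A: E[AᵀA] = (n2/n0) σ_A² I, entrywise
    (hAint : ∀ i j : Fin n0, Integrable (fun ω => ∑ k, A ω k i * A ω k j) P)
    (hA2 : ∀ i j : Fin n0,
      ∫ ω, (∑ k, A ω k i * A ω k j) ∂P
        = ((n2 : ℝ) / n0) * σA ^ 2 * (if i = j then 1 else 0))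
    -- ε has iid N(0, σ_ε²) entries and is independent of A (joint law is a product)
    (hjoint : Measure.map
        (fun ω => ((fun p : Fin n2 × Fin n0 => A ω p.1 p.2),
                   (fun p : Fin n2 × Fin m => ε ω p.1 p.2))) P
      = (Measure.map (fun ω => (fun p : Fin n2 × Fin n0 => A ω p.1 p.2)) P).prod
          (Measure.pi fun _ : Fin n2 × Fin m =>
            gaussianReal 0 (⟨σε ^ 2, sq_nonneg σε⟩ : NNReal)))
    (G : Matrix (Fin m) (Fin m) ℝ)
    (hG : G = ((n1 : ℝ)⁻¹ • (Fᵀ * F) + γ • (1 : Matrix (Fin m) (Fin m) ℝ))⁻¹) :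
    ∫ ω, (1 / ((n2 : ℝ) * m)) *
        frobSq ((Matrix.of (A ω) * X + Matrix.of (ε ω)) -
          ((n1 : ℝ)⁻¹ • ((Matrix.of (A ω) * X + Matrix.of (ε ω)) * G * Fᵀ)) * F) ∂P
      = γ ^ 2 * σA ^ 2 * (1 / ((n0 : ℝ) * m)) * Matrix.trace (Xᵀ * X * (G * G))
        + γ ^ 2 * σε ^ 2 * (1 / (m : ℝ)) * Matrix.trace (G * G) := by
  set a : Ω → (Fin n2 × Fin n0 → ℝ) := fun ω p => A ω p.1 p.2 with ha
  set e : Ω → (Fin n2 × Fin m → ℝ) := fun ω p => ε ω p.1 p.2 with he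
  set v : NNReal := ⟨σε ^ 2, sq_nonneg σε⟩ with hv
  set ν : Measure (Fin n2 × Fin m → ℝ) := Measure.pi fun _ => gaussianReal 0 v with hν
  have hpa : IsProbabilityMeasure (Measure.map a P) :=
    Measure.isProbabilityMeasure_map hAmeas.aemeasurable
  -- the joint law is nonzero, hence the pair `(a, e)` is a.e. measurable
  have hae : AEMeasurable (fun ω => (a ω, e ω)) P := by
    refine AEMeasurable.of_map_ne_zero ?_
    rw [hjoint]
    exact IsProbabilityMeasure.ne_zero _
  have hem : AEMeasurable e P := measurable_snd.comp_aemeasurable hae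
  have hlaw : Measure.map e P = ν := by
    have h := congrArg (Measure.map Prod.snd) hjoint
    rw [AEMeasurable.map_map_of_aemeasurable measurable_snd.aemeasurable hae,
      Measure.map_snd_prod] at h
    simpa [Function.comp_def] using h
  have hind : IndepFun a e P := by
    rw [indepFun_iff_map_prod_eq_prod_map_map hAmeas.aemeasurable hem, hlaw]
    exact hjoint
  obtain ⟨hL2, hmean, hcov⟩ := pi_gaussian_moments (ι := Fin n2 × Fin m) v
  have heL2 : ∀ i j, MemLp (fun ω => ε ω i j) 2 P := by
    intro i j
    have h := hL2 (i, j)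
    rw [← hν, ← hlaw] at h
    exact h.comp_of_map hem
  have hemean : ∀ i j, ∫ ω, ε ω i j ∂P = 0 := by
    intro i j
    have h := hmean (i, j)
    rw [← hν, ← hlaw, integral_map hem (measurable_pi_apply (i, j)).aestronglyMeasurable] at h
    exact h
  have hecov : ∀ i j k l, ∫ ω, ε ω i j * ε ω k l ∂P
      = if (i, j) = (k, l) then σε ^ 2 else 0 := by
    intro i j k l
    have h := hcov (i, j) (k, l)
    rw [← hν, ← hlaw, integral_map hem (by fun_prop)] at h
    exact h
  have hAm : ∀ k i, Measurable fun ω => A ω k i := fun k i =>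
    (measurable_pi_apply (k, i)).comp hAmeas
  -- each entry of `A` is dominated in square by a diagonal entry of `AᵀA`
  have hAL2 : ∀ k i, MemLp (fun ω => A ω k i) 2 P := by
    intro k i
    rw [memLp_two_iff_integrable_sq (hAm k i).aestronglyMeasurable]
    refine (hAint i i).mono' ((hAm k i).pow_const 2).aestronglyMeasurable
      (Filter.Eventually.of_forall fun ω => ?_)
    rw [Real.norm_of_nonneg (sq_nonneg _), pow_two]
    exact Finset.single_le_sum (f := fun k => A ω k i * A ω k i)
      (fun k _ => mul_self_nonneg _) (Finset.mem_univ k)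
  have hcross : ∀ k i j, ∫ ω, A ω k i * ε ω k j ∂P = 0 := by
    intro k i j
    have hi : IndepFun (fun ω => A ω k i) (fun ω => ε ω k j) P :=
      hind.comp (measurable_pi_apply (k, i)) (measurable_pi_apply (k, j))
    rw [hi.integral_fun_mul_eq_mul_integral (hAL2 k i).1 (heL2 k j).1, hemean, mul_zero]
  obtain ⟨hGt, hres⟩ := residual_eq (n2 := n2) hγ F G hG
  set B := X * G with hB
  -- second moments of the three random matrices, entrywise
  have i1 : ∀ i j, Integrable (fun ω => ((of (A ω))ᵀ * of (A ω)) i j) P := fun i j => by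
    simpa [Matrix.mul_apply] using hAint i j
  have m1 : ∀ i j, ∫ ω, ((of (A ω))ᵀ * of (A ω)) i j ∂P
      = (((n2 : ℝ) / n0 * σA ^ 2) • (1 : Matrix (Fin n0) (Fin n0) ℝ)) i j := fun i j => by
    simpa [Matrix.mul_apply, Matrix.one_apply] using hA2 i j
  have j2 : ∀ i j k, Integrable (fun ω => A ω k i * ε ω k j) P := fun i j k =>
    (hAL2 k i).integrable_mul (heL2 k j)
  have i2 : ∀ i j, Integrable (fun ω => ((of (A ω))ᵀ * of (ε ω)) i j) P := fun i j => by
    simp only [Matrix.mul_apply, transpose_apply, of_apply]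
    exact integrable_finsetSum _ fun k _ => j2 i j k
  have m2 : ∀ i j, ∫ ω, ((of (A ω))ᵀ * of (ε ω)) i j ∂P
      = (0 : Matrix (Fin n0) (Fin m) ℝ) i j := fun i j => by
    simp only [Matrix.mul_apply, transpose_apply, of_apply]
    rw [integral_finsetSum _ fun k _ => j2 i j k]
    simp [hcross]
  have j3 : ∀ i j k, Integrable (fun ω => ε ω k i * ε ω k j) P := fun i j k =>
    (heL2 k i).integrable_mul (heL2 k j)
  have i3 : ∀ i j, Integrable (fun ω => ((of (ε ω))ᵀ * of (ε ω)) i j) P := fun i j => by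
    simp only [Matrix.mul_apply, transpose_apply, of_apply]
    exact integrable_finsetSum _ fun k _ => j3 i j k
  have m3 : ∀ i j, ∫ ω, ((of (ε ω))ᵀ * of (ε ω)) i j ∂P
      = (((n2 : ℝ) * σε ^ 2) • (1 : Matrix (Fin m) (Fin m) ℝ)) i j := fun i j => by
    simp only [Matrix.mul_apply, transpose_apply, of_apply]
    rw [integral_finsetSum _ fun k _ => j3 i j k]
    simp [hecov, Matrix.one_apply]
  have hpt : ∀ ω, frobSq ((of (A ω) * X + of (ε ω)) -
      ((n1 : ℝ)⁻¹ • ((of (A ω) * X + of (ε ω)) * G * Fᵀ)) * F)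
      = γ ^ 2 * (trace ((of (A ω))ᵀ * of (A ω) * (B * Bᵀ))
        + 2 * trace ((of (A ω))ᵀ * of (ε ω) * (G * Bᵀ))
        + trace ((of (ε ω))ᵀ * of (ε ω) * (G * Gᵀ))) := fun ω => by
    rw [hres, frobSq_smul, Matrix.add_mul, Matrix.mul_assoc, frobSq_expand]
  have t1 := integrable_trace_mul _ (B * Bᵀ) i1
  have t2 := (integrable_trace_mul _ (G * Bᵀ) i2).const_mul 2
  have t3 := integrable_trace_mul _ (G * Gᵀ) i3
  have t12 : Integrable (fun ω => trace ((of (A ω))ᵀ * of (A ω) * (B * Bᵀ))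
      + 2 * trace ((of (A ω))ᵀ * of (ε ω) * (G * Bᵀ))) P := t1.add t2
  simp only [hpt]
  rw [integral_const_mul, integral_const_mul, integral_add t12 t3, integral_add t1 t2,
    integral_const_mul, integral_trace_mul _ _ _ i1 m1, integral_trace_mul _ _ _ i2 m2,
    integral_trace_mul _ _ _ i3 m3]
  have hBB : trace (B * Bᵀ) = trace (Xᵀ * X * (G * G)) := by
    rw [hB, transpose_mul, hGt, ← Matrix.mul_assoc, trace_mul_comm]
    simp only [Matrix.mul_assoc]
  simp only [Matrix.smul_mul, Matrix.one_mul, Matrix.zero_mul, trace_smul, trace_zero, hBB, hGt,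
    smul_eq_mul]
  have : (n0 : ℝ) ≠ 0 := by positivity
  have : (m : ℝ) ≠ 0 := by positivity
  have : (n2 : ℝ) ≠ 0 := by positivity
  field_simp
  ring
end

section
/- Let σ_Z > 0, b ∈ ℝ, 0 < δ ≤ 1/10, and let (N₁, N₂) be a centered jointly Gaussian vector with Var(N_i) = σ_Z²(1 + ε_i) and Cov(N₁, N₂) = σ_Z² ρ, where |ε₁|, |ε₂|, |ρ| ≤ δ. Let f : ℝ → ℝ be measurable with E|f(σ N + b)|^k < ∞ for 1 ≤ k ≤ 4 and all σ > 0 (N ~ N(0,1)), and suppose E[f(σ_Z N + b)] = 0. Set t_{ij} := E[f(N_i + b) f(N_j + b)]. Then there is a constant C (depending only on f, b, σ_Z) such that |E[( f(N₁+b) f(N₂+b) − t_{12} )( f(N₁+b)² − t_{11} )]| ≤ C δ. -/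
/-!
Expanding the product, the quantity to bound is `E[f₁³ f₂] - t₁₂ t₁₁`, where `f_i = f(N_i + b)`.
Both `E[f₁³ f₂]` and `t₁₂ = E[f₁ f₂]` have the form `E[g(N₁ + b) f(N₂ + b)]`. If `N₁, N₂` were
independent with variance `σ_Z²`, such an expectation would vanish, since `E[f(σ_Z N + b)] = 0`.

The joint density of `(N₁, N₂)` differs pointwise from that of the independent pair by at most
`156 δ` times the density of an independent pair of variance `2 σ_Z²` (`gauss_kernel_bound`,
`linGaussPDF_sub_le`). Integrating against `g(x + b) h(y + b)` gives `pair_bound`: integrability,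
and `E[g(N₁ + b) h(N₂ + b)] = E[g] E[h] + O(δ)`, where the error is controlled by the absolute
moments of `g` and `h` at standard deviation `√2 σ_Z`. With `(g, h) = (f³, f)` and `(f, f)` the main
term is zero, and with `(f², 1)` this bounds `t₁₁` uniformly.
-/

open Matrix MeasureTheory ProbabilityTheory

/-- Standard Gaussian product measure on `Fin k → ℝ`. -/
noncomputable def stdGaussPi (k : ℕ) : Measure (Fin k → ℝ) :=
  Measure.pi fun _ => gaussianReal 0 1

/-! ### Density of a planar Gaussian vector -/

/-- The Lebesgue density of `A x` for a standard Gaussian `x` in the plane, written through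
`A⁻¹`; meaningful only for invertible `A`. -/
noncomputable def linGaussPDF (A : Matrix (Fin 2) (Fin 2) ℝ) (y : Fin 2 → ℝ) : ℝ :=
  |A.det⁻¹| * (gaussianPDFReal 0 1 (A⁻¹.mulVec y 0) * gaussianPDFReal 0 1 (A⁻¹.mulVec y 1))

lemma linGaussPDF_nonneg (A : Matrix (Fin 2) (Fin 2) ℝ) (y : Fin 2 → ℝ) :
    0 ≤ linGaussPDF A y :=
  mul_nonneg (abs_nonneg _)
    (mul_nonneg (gaussianPDFReal_nonneg _ _ _) (gaussianPDFReal_nonneg _ _ _))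

lemma measurable_mulVec_two (A : Matrix (Fin 2) (Fin 2) ℝ) : Measurable A.mulVec :=
  (Continuous.matrix_mulVec continuous_const continuous_id).measurable

lemma measurable_linGaussPDF (A : Matrix (Fin 2) (Fin 2) ℝ) : Measurable (linGaussPDF A) := by
  have h := measurable_mulVec_two A⁻¹
  have h0 : Measurable fun y => A⁻¹.mulVec y 0 := (measurable_pi_apply 0).comp h
  have h1 : Measurable fun y => A⁻¹.mulVec y 1 := (measurable_pi_apply 1).comp h
  unfold linGaussPDF
  exact (((measurable_gaussianPDFReal 0 1).comp h0).mul
    ((measurable_gaussianPDFReal 0 1).comp h1)).const_mul _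

lemma stdGaussPi_two_eq_withDensity :
    stdGaussPi 2 = (volume : Measure (Fin 2 → ℝ)).withDensity
      (fun x => gaussianPDF 0 1 (x 0) * gaussianPDF 0 1 (x 1)) := by
  have hg : gaussianReal 0 1 = (volume : Measure ℝ).withDensity (gaussianPDF 0 1) :=
    gaussianReal_of_var_ne_zero 0 one_ne_zero
  have hm := measurable_gaussianPDF 0 1
  have h1 := (measurePreserving_finTwoArrow (gaussianReal 0 1)).symm
  have h2 := (volume_preserving_finTwoArrow ℝ).symm
  refine Measure.ext_of_lintegral _ fun φ hφ => ?_
  unfold stdGaussPi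
  rw [← h1.lintegral_comp hφ, lintegral_withDensity_eq_lintegral_mul _ (by fun_prop) hφ,
    ← h2.lintegral_comp (by fun_prop), hg, prod_withDensity hm hm,
    lintegral_withDensity_eq_lintegral_mul _ (by fun_prop)
      (show Measurable fun a => φ (MeasurableEquiv.finTwoArrow.symm a) from
        hφ.comp (MeasurableEquiv.measurable _))]
  rfl

lemma map_mulVec_stdGaussPi {A : Matrix (Fin 2) (Fin 2) ℝ} (hA : A.det ≠ 0) :
    (stdGaussPi 2).map A.mulVec =
      (volume : Measure (Fin 2 → ℝ)).withDensity (fun y => ENNReal.ofReal (linGaussPDF A y)) := by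
  have hmA := measurable_mulVec_two A
  have hmB := measurable_mulVec_two A⁻¹
  have hm := measurable_gaussianPDF 0 1
  have hinv : ∀ x, A⁻¹.mulVec (A.mulVec x) = x := fun x => by
    rw [Matrix.mulVec_mulVec, Matrix.nonsing_inv_mul _ (isUnit_iff_ne_zero.2 hA), Matrix.one_mulVec]
  set d : (Fin 2 → ℝ) → ENNReal := fun x => gaussianPDF 0 1 (x 0) * gaussianPDF 0 1 (x 1) with hd
  have hdm : Measurable d := by fun_prop
  have hmap := Real.map_matrix_volume_pi_eq_smul_volume_pi hA
  have hto : (⇑(toLin' A)) = A.mulVec := by ext x; simp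
  rw [hto] at hmap
  refine Measure.ext_of_lintegral _ fun φ hφ => ?_
  have hψ : Measurable fun y => φ y * d (A⁻¹.mulVec y) := hφ.mul (hdm.comp hmB)
  have hp : ∀ y, ENNReal.ofReal (linGaussPDF A y)
      = ENNReal.ofReal |A.det⁻¹| * d (A⁻¹.mulVec y) := fun y => by
    simp only [linGaussPDF, hd, gaussianPDF]
    rw [ENNReal.ofReal_mul (abs_nonneg _), ENNReal.ofReal_mul (gaussianPDFReal_nonneg _ _ _)]
  calc ∫⁻ y, φ y ∂(stdGaussPi 2).map A.mulVec
      = ∫⁻ x, φ (A.mulVec x) * d (A⁻¹.mulVec (A.mulVec x)) := by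
        rw [lintegral_map hφ hmA, stdGaussPi_two_eq_withDensity,
          lintegral_withDensity_eq_lintegral_mul _ hdm
            (show Measurable fun x => φ (A.mulVec x) from hφ.comp hmA)]
        simp only [hinv, Pi.mul_apply, mul_comm]
    _ = ENNReal.ofReal |A.det⁻¹| * ∫⁻ y, φ y * d (A⁻¹.mulVec y) := by
        rw [← lintegral_map (g := A.mulVec) hψ hmA, hmap, lintegral_smul_measure, smul_eq_mul]
    _ = _ := by
        rw [lintegral_withDensity_eq_lintegral_mul _ (measurable_linGaussPDF A).ennreal_ofReal hφ,
          ← lintegral_const_mul _ hψ]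
        refine lintegral_congr fun y => ?_
        simp only [Pi.mul_apply, hp]
        ring

lemma integrable_comp_mulVec_iff {A : Matrix (Fin 2) (Fin 2) ℝ} (hA : A.det ≠ 0)
    {F : (Fin 2 → ℝ) → ℝ} (hF : Measurable F) :
    Integrable (fun x => F (A.mulVec x)) (stdGaussPi 2) ↔
      Integrable (fun y => F y * linGaussPDF A y) := by
  have h := integrable_map_measure (μ := stdGaussPi 2) (f := A.mulVec) (g := F)
    hF.aestronglyMeasurable (measurable_mulVec_two A).aemeasurable
  rw [map_mulVec_stdGaussPi hA, integrable_withDensity_iff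
    (measurable_linGaussPDF A).ennreal_ofReal (by simp)] at h
  simp only [ENNReal.toReal_ofReal (linGaussPDF_nonneg _ _)] at h
  exact h.symm

lemma integral_comp_mulVec {A : Matrix (Fin 2) (Fin 2) ℝ} (hA : A.det ≠ 0)
    {F : (Fin 2 → ℝ) → ℝ} (hF : Measurable F) :
    ∫ x, F (A.mulVec x) ∂(stdGaussPi 2) = ∫ y, F y * linGaussPDF A y := by
  rw [← integral_map (μ := stdGaussPi 2) (φ := A.mulVec) (f := F)
    (measurable_mulVec_two A).aemeasurable hF.aestronglyMeasurable, map_mulVec_stdGaussPi hA,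
    integral_withDensity_eq_integral_toReal_smul
    (measurable_linGaussPDF A).ennreal_ofReal (by simp)]
  simp only [ENNReal.toReal_ofReal (linGaussPDF_nonneg _ _), smul_eq_mul, mul_comm]

/-- The density in terms of the covariance matrix `A * Aᵀ`, whose adjugate supplies the quadratic
form. -/
lemma linGaussPDF_eq {A : Matrix (Fin 2) (Fin 2) ℝ} (hA : A.det ≠ 0) (y : Fin 2 → ℝ) :
    linGaussPDF A y = (2 * Real.pi)⁻¹ * (|A.det|⁻¹ *
      Real.exp (-(((A * Aᵀ) 1 1 * y 0 ^ 2 - 2 * (A * Aᵀ) 0 1 * y 0 * y 1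
        + (A * Aᵀ) 0 0 * y 1 ^ 2) / A.det ^ 2) / 2)) := by
  have hpi : (√(2 * Real.pi))⁻¹ * (√(2 * Real.pi))⁻¹ = (2 * Real.pi)⁻¹ := by
    rw [← mul_inv, Real.mul_self_sqrt (by positivity)]
  unfold linGaussPDF gaussianPDFReal
  rw [abs_inv, ← hpi]
  simp only [NNReal.coe_one, mul_one, sub_zero]
  rw [mul_mul_mul_comm, ← Real.exp_add]
  have : -(A⁻¹.mulVec y 0) ^ 2 / 2 + -(A⁻¹.mulVec y 1) ^ 2 / 2 =
     -(((A * Aᵀ) 1 1 * y 0 ^ 2 - 2 * (A * Aᵀ) 0 1 * y 0 * y 1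
        + (A * Aᵀ) 0 0 * y 1 ^ 2) / A.det ^ 2) / 2 := by
    simp only [Matrix.inv_def, Ring.inverse_eq_inv', Matrix.adjugate_fin_two, Matrix.mulVec, dotProduct,
      Matrix.mul_apply, Fin.sum_univ_two, Matrix.smul_apply, Matrix.of_apply, Matrix.cons_val_zero,
      Matrix.cons_val_one, Matrix.transpose_apply, smul_eq_mul]
    simp
    field_simp
    ring
  rw [this]
  ring

/-! ### Pointwise comparison of densities -/

lemma exp_sub_exp_le {a b c : ℝ} (ha : a ≤ c) :
    Real.exp a - Real.exp b ≤ |a - b| * Real.exp c := by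
  have h1 : Real.exp b = Real.exp a * Real.exp (b - a) := by
    rw [← Real.exp_add]; congr 1; ring
  have h2 : b - a + 1 ≤ Real.exp (b - a) := Real.add_one_le_exp _
  have h3 : Real.exp a - Real.exp b ≤ (a - b) * Real.exp a := by
    rw [h1]; nlinarith [Real.exp_pos a]
  refine h3.trans ((mul_le_mul_of_nonneg_right (le_abs_self _) (Real.exp_pos a).le).trans ?_)
  gcongr

/-- Perturbation estimates for the determinant `D` of the normalized covariance matrix and for the
quadratic form `Q` of its inverse, against the identity covariance. -/
lemma cov_perturbation {δ e₁ e₂ ρ u v D Q R : ℝ} (hδ : δ ≤ 1 / 10) (h₁ : |e₁| ≤ δ)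
    (h₂ : |e₂| ≤ δ) (hρ : |ρ| ≤ δ) (hD : D = (1 + e₁) * (1 + e₂) - ρ ^ 2)
    (hQ : Q = ((1 + e₂) * u ^ 2 - 2 * ρ * u * v + (1 + e₁) * v ^ 2) / D)
    (hR : R = u ^ 2 + v ^ 2) :
    |D - 1| ≤ 22 / 10 * δ ∧ 6 / 10 * R ≤ Q ∧ |Q - R| ≤ 6 * δ * R := by
  have hδ0 : 0 ≤ δ := (abs_nonneg _).trans h₁
  have hR0 : 0 ≤ R := by rw [hR]; positivity
  have hρ2 : ρ ^ 2 ≤ δ / 10 := by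
    rw [← sq_abs]; nlinarith only [hρ, abs_nonneg ρ, hδ]
  have he12 : |e₁ * e₂| ≤ δ / 10 := by
    rw [abs_mul]; nlinarith only [abs_nonneg e₁, abs_nonneg e₂, h₁, h₂, hδ]
  have hD1 : |D - 1| ≤ 22 / 10 * δ := by
    have h1 := abs_le.1 h₁
    have h2 := abs_le.1 h₂
    have h3 := abs_le.1 he12
    rw [abs_le, hD]
    constructor <;> linarith [sq_nonneg ρ, h1.1, h1.2, h2.1, h2.2, h3.1, h3.2]
  obtain ⟨hDl, hDu⟩ := abs_le.1 hD1
  have hDlo : 78 / 100 ≤ D := by linarith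
  have hDhi : D ≤ 122 / 100 := by linarith
  have hDpos : 0 < D := by linarith
  generalize hP : (1 + e₂) * u ^ 2 - 2 * ρ * u * v + (1 + e₁) * v ^ 2 = P at hQ
  have huv : |2 * ρ * u * v| ≤ δ * R := by
    have h : |2 * ρ * u * v| = |ρ| * (2 * |u| * |v|) := by
      simp only [abs_mul, abs_two]; ring
    have h2 : 2 * |u| * |v| ≤ R := by
      rw [hR, ← sq_abs u, ← sq_abs v]; nlinarith only [sq_nonneg (|u| - |v|)]
    rw [h]
    gcongr
  have hPR : |P - R| ≤ 2 * δ * R := by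
    have hsplit : P - R = e₂ * u ^ 2 + e₁ * v ^ 2 - 2 * ρ * u * v := by rw [← hP, hR]; ring
    have hu2 : |e₂ * u ^ 2| ≤ δ * u ^ 2 := by
      rw [abs_mul, abs_of_nonneg (sq_nonneg u)]; gcongr
    have hv2 : |e₁ * v ^ 2| ≤ δ * v ^ 2 := by
      rw [abs_mul, abs_of_nonneg (sq_nonneg v)]; gcongr
    have hδR : δ * R = δ * u ^ 2 + δ * v ^ 2 := by rw [hR]; ring
    rw [hsplit]
    linarith [abs_sub (e₂ * u ^ 2 + e₁ * v ^ 2) (2 * ρ * u * v),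
      abs_add_le (e₂ * u ^ 2) (e₁ * v ^ 2)]
  have hδR0 : 0 ≤ δ * R := by positivity
  refine ⟨hD1, ?_, ?_⟩
  · rw [hQ, le_div_iff₀ hDpos]
    have h1 : 6 / 10 * R * D ≤ 6 / 10 * R * (122 / 100) := by gcongr
    have h2 : δ * R ≤ 1 / 10 * R := by gcongr
    linarith [(abs_le.1 hPR).1]
  · have h : Q - R = ((P - R) - (D - 1) * R) / D := by
      rw [hQ]; field_simp; ring
    have h3 : |(D - 1) * R| ≤ 22 / 10 * δ * R := by
      rw [abs_mul, abs_of_nonneg hR0]; gcongr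
    have h4 : 6 * δ * R * (78 / 100) ≤ 6 * δ * R * D := by gcongr
    rw [h, abs_div, abs_of_pos hDpos, div_le_iff₀ hDpos]
    linarith [abs_sub (P - R) ((D - 1) * R)]

lemma inv_sqrt_bounds {δ D : ℝ} (hδ : δ ≤ 1 / 10) (hD : |D - 1| ≤ 22 / 10 * δ) :
    0 < (√D)⁻¹ ∧ (√D)⁻¹ ≤ 10 / 8 ∧ |(√D)⁻¹ - 1| ≤ 3 * δ := by
  have hDlo : 78 / 100 ≤ D := by linarith [(abs_le.1 hD).1]
  have hs8 : 8 / 10 ≤ √D := Real.le_sqrt_of_sq_le (by linarith)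
  have hspos : 0 < √D := by linarith
  have hδ0 : 0 ≤ δ := by linarith [abs_nonneg (D - 1)]
  have hs1 : |√D - 1| ≤ 22 / 10 * δ := by
    refine le_trans ?_ hD
    have h : D - 1 = (√D - 1) * (√D + 1) := by
      linear_combination -(Real.mul_self_sqrt (show 0 ≤ D by linarith))
    rw [h, abs_mul, abs_of_pos (show 0 < √D + 1 by linarith)]
    exact le_mul_of_one_le_right (abs_nonneg _) (by linarith)
  refine ⟨inv_pos.2 hspos, ?_, ?_⟩
  · rw [inv_le_comm₀ hspos (by norm_num)]; linarith
  · have h : (√D)⁻¹ - 1 = -(√D - 1) / √D := by field_simp; ring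
    have h2 : 3 * δ * (8 / 10) ≤ 3 * δ * √D := by gcongr
    rw [h, abs_div, abs_neg, abs_of_pos hspos, div_le_iff₀ hspos]
    linarith

/-- Comparison of the unnormalized densities for `σ = 1`: the difference between the perturbed and
the standard density is at most a multiple of `δ` times the density of variance `2`. The wider
Gaussian absorbs the factor `u² + v²` that appears on differentiating the exponential. -/
lemma gauss_kernel_bound {δ e₁ e₂ ρ u v : ℝ} (hδ : δ ≤ 1 / 10) (h₁ : |e₁| ≤ δ)
    (h₂ : |e₂| ≤ δ) (hρ : |ρ| ≤ δ) :
    |(√((1 + e₁) * (1 + e₂) - ρ ^ 2))⁻¹ *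
        Real.exp (-(((1 + e₂) * u ^ 2 - 2 * ρ * u * v + (1 + e₁) * v ^ 2) /
          ((1 + e₁) * (1 + e₂) - ρ ^ 2)) / 2) - Real.exp (-(u ^ 2 + v ^ 2) / 2)|
      ≤ 156 * δ * (2⁻¹ * Real.exp (-(u ^ 2 + v ^ 2) / 4)) := by
  have hδ0 : 0 ≤ δ := (abs_nonneg _).trans h₁
  have hR0 : 0 ≤ u ^ 2 + v ^ 2 := by positivity
  obtain ⟨hD1, hQlo, hQR⟩ := cov_perturbation (u := u) (v := v) hδ h₁ h₂ hρ rfl rfl rfl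
  obtain ⟨hw0, hw, hw1⟩ := inv_sqrt_bounds hδ hD1
  generalize ((1 + e₂) * u ^ 2 - 2 * ρ * u * v + (1 + e₁) * v ^ 2) /
    ((1 + e₁) * (1 + e₂) - ρ ^ 2) = Q at *
  generalize (√((1 + e₁) * (1 + e₂) - ρ ^ 2))⁻¹ = w at *
  generalize u ^ 2 + v ^ 2 = R at *
  set E := Real.exp (-R / 4) with hE
  have hRE : R * Real.exp (-(3 / 10 * R)) ≤ 20 * E := by
    have h1 : R ≤ 20 * Real.exp (R / 20) := by linarith [Real.add_one_le_exp (R / 20)]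
    have h2 : E = Real.exp (R / 20) * Real.exp (-(3 / 10 * R)) := by
      rw [hE, ← Real.exp_add]; congr 1; ring
    rw [h2, ← mul_assoc]
    gcongr
  have hexp : |Real.exp (-Q / 2) - Real.exp (-R / 2)|
      ≤ 3 * δ * R * Real.exp (-(3 / 10 * R)) := by
    have hab : |(-Q / 2) - (-R / 2)| ≤ 3 * δ * R := by
      rw [show (-Q / 2) - (-R / 2) = -((Q - R) / 2) by ring, abs_neg, abs_div, abs_two]
      linarith
    have hmul := mul_le_mul_of_nonneg_right hab (Real.exp_pos (-(3 / 10 * R))).le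
    have hq := exp_sub_exp_le (b := -R / 2) (show -Q / 2 ≤ -(3 / 10 * R) by linarith)
    have hr := exp_sub_exp_le (b := -Q / 2) (show -R / 2 ≤ -(3 / 10 * R) by linarith)
    rw [abs_sub_comm] at hr
    rw [abs_le]
    constructor <;> linarith
  have hRE2 : Real.exp (-R / 2) ≤ E := Real.exp_le_exp.2 (by linarith)
  have hsplit : w * Real.exp (-Q / 2) - Real.exp (-R / 2) =
      w * (Real.exp (-Q / 2) - Real.exp (-R / 2)) + (w - 1) * Real.exp (-R / 2) := by ring
  rw [hsplit]
  calc _ ≤ w * |Real.exp (-Q / 2) - Real.exp (-R / 2)| + |w - 1| * Real.exp (-R / 2) := by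
        refine (abs_add_le _ _).trans_eq ?_
        rw [abs_mul, abs_mul, abs_of_pos hw0, abs_of_pos (Real.exp_pos _)]
    _ ≤ 10 / 8 * (3 * δ * (20 * E)) + 3 * δ * E := by
        refine add_le_add (mul_le_mul hw (hexp.trans ?_) (abs_nonneg _) (by norm_num)) ?_
        · rw [mul_assoc (3 * δ)]; gcongr
        · gcongr
    _ = 156 * δ * (2⁻¹ * E) := by ring

lemma det_sq_eq (A : Matrix (Fin 2) (Fin 2) ℝ) :
    A.det ^ 2 = (A * Aᵀ) 0 0 * (A * Aᵀ) 1 1 - (A * Aᵀ) 0 1 ^ 2 := by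
  simp only [Matrix.det_fin_two, Matrix.mul_apply, Fin.sum_univ_two, Matrix.transpose_apply]
  ring

lemma smul_one_mulVec (c : ℝ) (x : Fin 2 → ℝ) (i : Fin 2) :
    (c • (1 : Matrix (Fin 2) (Fin 2) ℝ)).mulVec x i = c * x i := by
  simp [Matrix.smul_mulVec]

lemma det_smul_one_ne_zero {c : ℝ} (hc : 0 < c) :
    (c • (1 : Matrix (Fin 2) (Fin 2) ℝ)).det ≠ 0 := by
  simp [hc.ne']

lemma linGaussPDF_smul_one {c : ℝ} (hc : 0 < c) (y : Fin 2 → ℝ) :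
    linGaussPDF (c • 1) y = (2 * Real.pi)⁻¹ *
      ((c ^ 2)⁻¹ * Real.exp (-((y 0 ^ 2 + y 1 ^ 2) / c ^ 2) / 2)) := by
  rw [linGaussPDF_eq (det_smul_one_ne_zero hc)]
  have hd : (c • (1 : Matrix (Fin 2) (Fin 2) ℝ)).det = c ^ 2 := by simp
  have h : (c • (1 : Matrix (Fin 2) (Fin 2) ℝ)) * (c • 1)ᵀ = (c ^ 2) • 1 := by
    simp [smul_smul, pow_two]
  rw [hd, h, abs_of_pos (by positivity)]
  simp only [Matrix.smul_apply, Matrix.one_apply, smul_eq_mul]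
  simp only [if_true, mul_one, zero_ne_one, if_false, mul_zero, zero_mul, sub_zero]
  have hc' := hc.ne'
  congr 4
  field_simp

/-! ### Comparison of expectations -/

section comparison

variable {σ δ ε₁ ε₂ ρ : ℝ} {A : Matrix (Fin 2) (Fin 2) ℝ}

lemma det_ne_zero_of_cov (hσ : 0 < σ) (hδ : δ ≤ 1 / 10)
    (h₁ : |ε₁| ≤ δ) (h₂ : |ε₂| ≤ δ) (hρ : |ρ| ≤ δ)
    (hA00 : (A * Aᵀ) 0 0 = σ ^ 2 * (1 + ε₁)) (hA11 : (A * Aᵀ) 1 1 = σ ^ 2 * (1 + ε₂))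
    (hA01 : (A * Aᵀ) 0 1 = σ ^ 2 * ρ) : A.det ≠ 0 := by
  intro h
  have hsq := det_sq_eq A
  rw [h, hA00, hA11, hA01] at hsq
  have hD : (1 + ε₁) * (1 + ε₂) - ρ ^ 2 = 0 := by
    have : (σ ^ 2) ^ 2 * ((1 + ε₁) * (1 + ε₂) - ρ ^ 2) = 0 := by linear_combination -hsq
    exact (mul_eq_zero.1 this).resolve_left (by positivity)
  have := abs_le.1 h₁
  have := abs_le.1 h₂
  have := abs_le.1 hρ
  nlinarith

lemma linGaussPDF_sub_le (hσ : 0 < σ) (hδ : δ ≤ 1 / 10)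
    (h₁ : |ε₁| ≤ δ) (h₂ : |ε₂| ≤ δ) (hρ : |ρ| ≤ δ)
    (hA00 : (A * Aᵀ) 0 0 = σ ^ 2 * (1 + ε₁)) (hA11 : (A * Aᵀ) 1 1 = σ ^ 2 * (1 + ε₂))
    (hA01 : (A * Aᵀ) 0 1 = σ ^ 2 * ρ) (y : Fin 2 → ℝ) :
    |linGaussPDF A y - linGaussPDF (σ • 1) y| ≤ 156 * δ * linGaussPDF ((√2 * σ) • 1) y := by
  have hdet := det_ne_zero_of_cov hσ hδ h₁ h₂ hρ hA00 hA11 hA01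
  have hsq : A.det ^ 2 = (σ ^ 2) ^ 2 * ((1 + ε₁) * (1 + ε₂) - ρ ^ 2) := by
    rw [det_sq_eq, hA00, hA11, hA01]; ring
  have habs : |A.det| = σ ^ 2 * √((1 + ε₁) * (1 + ε₂) - ρ ^ 2) := by
    rw [← Real.sqrt_sq_eq_abs, hsq, Real.sqrt_mul (by positivity), Real.sqrt_sq (by positivity)]
  have hDne : (1 + ε₁) * (1 + ε₂) - ρ ^ 2 ≠ 0 := by
    intro h; rw [h, mul_zero] at hsq; exact hdet (pow_eq_zero_iff two_ne_zero |>.1 hsq)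
  have hb := gauss_kernel_bound (u := y 0 / σ) (v := y 1 / σ) hδ h₁ h₂ hρ
  have hσ' := hσ.ne'
  rw [linGaussPDF_eq hdet, linGaussPDF_smul_one hσ, linGaussPDF_smul_one (by positivity),
    hA00, hA11, hA01, habs, hsq, mul_pow, Real.sq_sqrt (by norm_num)]
  generalize hD : (1 + ε₁) * (1 + ε₂) - ρ ^ 2 = D at *
  have e1 : (σ ^ 2 * (1 + ε₂) * y 0 ^ 2 - 2 * (σ ^ 2 * ρ) * y 0 * y 1
      + σ ^ 2 * (1 + ε₁) * y 1 ^ 2) / ((σ ^ 2) ^ 2 * D)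
      = ((1 + ε₂) * (y 0 / σ) ^ 2 - 2 * ρ * (y 0 / σ) * (y 1 / σ)
        + (1 + ε₁) * (y 1 / σ) ^ 2) / D := by
    field_simp
  have e2 : -((y 0 ^ 2 + y 1 ^ 2) / σ ^ 2) / 2 = -((y 0 / σ) ^ 2 + (y 1 / σ) ^ 2) / 2 := by
    field_simp
  have e3 : -((y 0 ^ 2 + y 1 ^ 2) / (2 * σ ^ 2)) / 2
      = -((y 0 / σ) ^ 2 + (y 1 / σ) ^ 2) / 4 := by
    field_simp
    norm_num
  rw [e1, e2, e3, ← mul_sub, mul_inv (σ ^ 2), mul_assoc (σ ^ 2)⁻¹, ← mul_sub, ← mul_assoc,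
    abs_mul, abs_of_pos (show 0 < (2 * Real.pi)⁻¹ * (σ ^ 2)⁻¹ by positivity)]
  refine (mul_le_mul_of_nonneg_left hb (by positivity)).trans_eq ?_
  rw [mul_inv 2 (σ ^ 2)]
  ring

/-- Transfer of the pointwise density comparison to expectations of an arbitrary observable. -/
lemma integral_comp_mulVec_sub_le (hσ : 0 < σ) (hδ : δ ≤ 1 / 10)
    (h₁ : |ε₁| ≤ δ) (h₂ : |ε₂| ≤ δ) (hρ : |ρ| ≤ δ)
    (hA00 : (A * Aᵀ) 0 0 = σ ^ 2 * (1 + ε₁)) (hA11 : (A * Aᵀ) 1 1 = σ ^ 2 * (1 + ε₂))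
    (hA01 : (A * Aᵀ) 0 1 = σ ^ 2 * ρ) {F : (Fin 2 → ℝ) → ℝ} (hF : Measurable F)
    (hi : Integrable (fun x => F ((σ • (1 : Matrix (Fin 2) (Fin 2) ℝ)).mulVec x)) (stdGaussPi 2))
    (hi' : Integrable (fun x => F (((√2 * σ) • (1 : Matrix (Fin 2) (Fin 2) ℝ)).mulVec x))
      (stdGaussPi 2)) :
    Integrable (fun x => F (A.mulVec x)) (stdGaussPi 2) ∧
    |∫ x, F (A.mulVec x) ∂(stdGaussPi 2)
        - ∫ x, F ((σ • (1 : Matrix (Fin 2) (Fin 2) ℝ)).mulVec x) ∂(stdGaussPi 2)|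
      ≤ 156 * δ *
        ∫ x, |F (((√2 * σ) • (1 : Matrix (Fin 2) (Fin 2) ℝ)).mulVec x)| ∂(stdGaussPi 2) := by
  have hdet := det_ne_zero_of_cov hσ hδ h₁ h₂ hρ hA00 hA11 hA01
  have hdσ := det_smul_one_ne_zero hσ
  have hds := det_smul_one_ne_zero (show 0 < √2 * σ by positivity)
  have hpt := linGaussPDF_sub_le hσ hδ h₁ h₂ hρ hA00 hA11 hA01
  have hFabs : Measurable fun y => |F y| := hF.abs
  have hdom := (integrable_comp_mulVec_iff hds hFabs).1 hi'.abs
  rw [integrable_comp_mulVec_iff hdσ hF] at hi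
  have hle : ∀ y, ‖F y * linGaussPDF A y - F y * linGaussPDF (σ • 1) y‖
      ≤ 156 * δ * (|F y| * linGaussPDF ((√2 * σ) • 1) y) := fun y => by
    rw [← mul_sub, Real.norm_eq_abs, abs_mul, mul_left_comm]
    exact mul_le_mul_of_nonneg_left (hpt y) (abs_nonneg _)
  have hdiff : Integrable
      (fun y => F y * linGaussPDF A y - F y * linGaussPDF (σ • 1) y) := by
    refine (hdom.const_mul (156 * δ)).mono' ?_ (ae_of_all _ hle)
    exact ((hF.mul (measurable_linGaussPDF _)).sub
      (hF.mul (measurable_linGaussPDF _))).aestronglyMeasurable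
  have hAi : Integrable (fun y => F y * linGaussPDF A y) := by
    refine (hdiff.add hi).congr (ae_of_all _ fun y => ?_)
    simp
  refine ⟨(integrable_comp_mulVec_iff hdet hF).2 hAi, ?_⟩
  rw [integral_comp_mulVec hdet hF, integral_comp_mulVec hdσ hF, integral_comp_mulVec hds hFabs,
    ← integral_sub hAi hi, ← integral_const_mul, ← Real.norm_eq_abs]
  exact norm_integral_le_of_norm_le (hdom.const_mul _) (ae_of_all _ hle)

lemma integrable_mul_stdGaussPi {g h : ℝ → ℝ} (hg : Integrable g (gaussianReal 0 1))
    (hh : Integrable h (gaussianReal 0 1)) :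
    Integrable (fun x => g (x 0) * h (x 1)) (stdGaussPi 2) := by
  have := Integrable.fintype_prod (ι := Fin 2) (E := ℝ) (μ := fun _ => gaussianReal 0 1)
    (f := ![g, h]) (fun i => by fin_cases i <;> assumption)
  simpa [Fin.prod_univ_two, stdGaussPi] using this

lemma integral_mul_stdGaussPi (g h : ℝ → ℝ) :
    ∫ x, g (x 0) * h (x 1) ∂(stdGaussPi 2)
      = (∫ x, g x ∂(gaussianReal 0 1)) * ∫ x, h x ∂(gaussianReal 0 1) := by
  have := integral_fin_nat_prod_eq_prod (n := 2) (E := fun _ => ℝ)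
    (μ := fun _ => gaussianReal 0 1) (![g, h])
  simpa [Fin.prod_univ_two, stdGaussPi] using this

/-- For `(N₁, N₂) = A x` with covariance matrix within `δ σ²` of `σ² I`, entry by entry, the
expectation of `g(N₁ + b) h(N₂ + b)` differs from its
value for independent entries of standard deviation `σ` by `O(δ)`, with an explicit constant. -/
lemma pair_bound (hσ : 0 < σ) (hδ : δ ≤ 1 / 10)
    (h₁ : |ε₁| ≤ δ) (h₂ : |ε₂| ≤ δ) (hρ : |ρ| ≤ δ)
    (hA00 : (A * Aᵀ) 0 0 = σ ^ 2 * (1 + ε₁)) (hA11 : (A * Aᵀ) 1 1 = σ ^ 2 * (1 + ε₂))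
    (hA01 : (A * Aᵀ) 0 1 = σ ^ 2 * ρ) {g h : ℝ → ℝ} {b : ℝ} (hg : Measurable g)
    (hh : Measurable h)
    (hgi : ∀ c, 0 < c → Integrable (fun x => g (c * x + b)) (gaussianReal 0 1))
    (hhi : ∀ c, 0 < c → Integrable (fun x => h (c * x + b)) (gaussianReal 0 1)) :
    Integrable (fun x => g (A.mulVec x 0 + b) * h (A.mulVec x 1 + b)) (stdGaussPi 2) ∧
    |∫ x, g (A.mulVec x 0 + b) * h (A.mulVec x 1 + b) ∂(stdGaussPi 2)
        - (∫ x, g (σ * x + b) ∂(gaussianReal 0 1)) * ∫ x, h (σ * x + b) ∂(gaussianReal 0 1)|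
      ≤ 156 * δ * ((∫ x, |g (√2 * σ * x + b)| ∂(gaussianReal 0 1)) *
        ∫ x, |h (√2 * σ * x + b)| ∂(gaussianReal 0 1)) := by
  have hs : 0 < √2 * σ := by positivity
  have key := integral_comp_mulVec_sub_le hσ hδ h₁ h₂ hρ hA00 hA11 hA01
    (F := fun y => g (y 0 + b) * h (y 1 + b)) (by fun_prop)
    (by simpa only [smul_one_mulVec] using integrable_mul_stdGaussPi (hgi σ hσ) (hhi σ hσ))
    (by simpa only [smul_one_mulVec] using integrable_mul_stdGaussPi (hgi _ hs) (hhi _ hs))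
  simp only [smul_one_mulVec, abs_mul (g _)] at key
  rwa [integral_mul_stdGaussPi (fun x => g (σ * x + b)) (fun x => h (σ * x + b)),
    integral_mul_stdGaussPi (fun x => |g (√2 * σ * x + b)|)
      (fun x => |h (√2 * σ * x + b)|)] at key

end comparison

/-- covariance bound for a product of two feature entries sharing one
column index against a squared entry.  For any centered jointly Gaussian pair
`(N₁, N₂)` (realized as `N_i = (A x)_i` for standard Gaussian `x`) with
`Var(N_i) = σ_Z²(1+ε_i)`, `Cov(N₁,N₂) = σ_Z² ρ`, `|ε₁|,|ε₂|,|ρ| ≤ δ ≤ 1/10`, and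
`f` with finite Gaussian moments up to order 4 and `E[f(σ_Z N + b)] = 0`,
`|E[(f(N₁+b) f(N₂+b) − t₁₂)(f(N₁+b)² − t₁₁)]| ≤ C δ`. -/
theorem covariance_bound_pair_vs_square
    (σZ : ℝ) (hσZ : 0 < σZ) (b : ℝ) (f : ℝ → ℝ) (hf : Measurable f)
    (hmom : ∀ σ : ℝ, 0 < σ → ∀ k : ℕ, 1 ≤ k → k ≤ 4 →
      Integrable (fun x => |f (σ * x + b)| ^ k) (gaussianReal 0 1))
    (hcen : ∫ x, f (σZ * x + b) ∂(gaussianReal 0 1) = 0) :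
    ∃ C : ℝ, ∀ δ : ℝ, 0 < δ → δ ≤ 1 / 10 →
      ∀ ε₁ ε₂ ρ : ℝ, |ε₁| ≤ δ → |ε₂| ≤ δ → |ρ| ≤ δ →
      ∀ A : Matrix (Fin 2) (Fin 2) ℝ,
        (A * Aᵀ) 0 0 = σZ ^ 2 * (1 + ε₁) →
        (A * Aᵀ) 1 1 = σZ ^ 2 * (1 + ε₂) →
        (A * Aᵀ) 0 1 = σZ ^ 2 * ρ →
        |∫ x, (f (A.mulVec x 0 + b) * f (A.mulVec x 1 + b)
                - ∫ y, f (A.mulVec y 0 + b) * f (A.mulVec y 1 + b) ∂(stdGaussPi 2))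
             * ((f (A.mulVec x 0 + b)) ^ 2
                - ∫ y, (f (A.mulVec y 0 + b)) ^ 2 ∂(stdGaussPi 2))
           ∂(stdGaussPi 2)|
          ≤ C * δ := by
  have hsgn : ∀ k : ℕ, 1 ≤ k → k ≤ 4 → ∀ c : ℝ, 0 < c →
      Integrable (fun x => f (c * x + b) ^ k) (gaussianReal 0 1) := fun k hk hk' c hc => by
    refine (hmom c hc k hk hk').mono' ?_ (ae_of_all _ fun x => by simp)
    exact ((hf.comp (by fun_prop)).pow_const k).aestronglyMeasurable
  have hi1 : ∀ c : ℝ, 0 < c → Integrable (fun x => f (c * x + b)) (gaussianReal 0 1) := by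
    simpa using hsgn 1 le_rfl (by norm_num)
  have hi2 := hsgn 2 (by norm_num) (by norm_num)
  have hi3 := hsgn 3 (by norm_num) (by norm_num)
  set m₂ := ∫ x, f (σZ * x + b) ^ 2 ∂(gaussianReal 0 1) with hm₂
  set M₁ := ∫ x, |f (√2 * σZ * x + b)| ∂(gaussianReal 0 1) with hM₁
  set M₂ := ∫ x, |f (√2 * σZ * x + b) ^ 2| ∂(gaussianReal 0 1) with hM₂
  set M₃ := ∫ x, |f (√2 * σZ * x + b) ^ 3| ∂(gaussianReal 0 1) with hM₃
  have hM₁0 : 0 ≤ M₁ := integral_nonneg fun x => abs_nonneg _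
  have hM₂0 : 0 ≤ M₂ := integral_nonneg fun x => abs_nonneg _
  refine ⟨156 * (M₃ * M₁) + 156 * (M₁ * M₁) * (|m₂| + 16 * M₂), ?_⟩
  intro δ hδ0 hδ ε₁ ε₂ ρ h₁ h₂ hρ A hA00 hA11 hA01
  obtain ⟨I12, B12⟩ := pair_bound hσZ hδ h₁ h₂ hρ hA00 hA11 hA01 hf hf hi1 hi1
  obtain ⟨I31, B31⟩ := pair_bound hσZ hδ h₁ h₂ hρ hA00 hA11 hA01
    (g := fun x => f x ^ 3) (hf.pow_const 3) hf hi3 hi1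
  obtain ⟨I11, B11⟩ := pair_bound hσZ hδ h₁ h₂ hρ hA00 hA11 hA01
    (g := fun x => f x ^ 2) (h := fun _ => 1) (b := b) (hf.pow_const 2) measurable_const hi2
    (fun _ _ => integrable_const _)
  simp only [hcen, mul_zero, sub_zero, mul_one, abs_one, integral_const, probReal_univ,
    smul_eq_mul] at I11 B12 B31 B11
  rw [← hM₁] at B12 B31
  rw [← hM₃] at B31
  rw [← hM₂, ← hm₂] at B11
  set t₁₂ := ∫ y, f (A.mulVec y 0 + b) * f (A.mulVec y 1 + b) ∂(stdGaussPi 2) with ht₁₂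
  set t₁₁ := ∫ y, f (A.mulVec y 0 + b) ^ 2 ∂(stdGaussPi 2) with ht₁₁
  set e₃₁ := ∫ y, f (A.mulVec y 0 + b) ^ 3 * f (A.mulVec y 1 + b) ∂(stdGaussPi 2) with he₃₁
  have : IsProbabilityMeasure (stdGaussPi 2) := by unfold stdGaussPi; infer_instance
  have hexpand : ∫ x, (f (A.mulVec x 0 + b) * f (A.mulVec x 1 + b) - t₁₂)
      * (f (A.mulVec x 0 + b) ^ 2 - t₁₁) ∂(stdGaussPi 2) = e₃₁ - t₁₂ * t₁₁ := by
    have hpt : ∀ x : Fin 2 → ℝ, (f (A.mulVec x 0 + b) * f (A.mulVec x 1 + b) - t₁₂)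
        * (f (A.mulVec x 0 + b) ^ 2 - t₁₁)
        = (f (A.mulVec x 0 + b) ^ 3 * f (A.mulVec x 1 + b)
          - t₁₁ * (f (A.mulVec x 0 + b) * f (A.mulVec x 1 + b)))
          - (t₁₂ * f (A.mulVec x 0 + b) ^ 2 - t₁₂ * t₁₁) := fun x => by ring
    simp only [hpt]
    rw [integral_sub (by exact I31.sub (I12.const_mul t₁₁))
        (by exact (I11.const_mul t₁₂).sub (integrable_const _)),
      integral_sub I31 (I12.const_mul t₁₁), integral_sub (I11.const_mul t₁₂) (integrable_const _),
      integral_const_mul, integral_const_mul, ← ht₁₂, ← ht₁₁, ← he₃₁]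
    simp
    ring
  rw [hexpand]
  have ht11 : |t₁₁| ≤ |m₂| + 16 * M₂ := by
    have h := abs_add_le (t₁₁ - m₂) m₂
    rw [sub_add_cancel] at h
    -- `156 δ ≤ 15.6 ≤ 16`
    have h2 : 156 * δ * M₂ ≤ 16 * M₂ := by gcongr; linarith
    linarith
  calc |e₃₁ - t₁₂ * t₁₁| ≤ |e₃₁| + |t₁₂| * |t₁₁| := by
        rw [← abs_mul]; exact abs_sub _ _
    _ ≤ 156 * δ * (M₃ * M₁) + 156 * δ * (M₁ * M₁) * (|m₂| + 16 * M₂) := by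
        gcongr
    _ = _ := by ring
end

section
/- Let σ_Z > 0, b ∈ ℝ, 0 < δ ≤ 1/10, and let (N₁, N₂) be a centered jointly Gaussian vector with Var(N_i) = σ_Z²(1 + ε_i) and Cov(N₁, N₂) = σ_Z² ρ, where |ε₁|, |ε₂|, |ρ| ≤ δ. Let f : ℝ → ℝ be measurable with E|f(σ N + b)|^k < ∞ for 1 ≤ k ≤ 4 and all σ > 0 (N ~ N(0,1)), and suppose E[f(σ_Z N + b)] = 0. Set t_{ii} := E[f(N_i + b)²]. Then there is a constant C (depending only on f, b, σ_Z) such that |E[( f(N₁+b)² − t_{11} )( f(N₂+b)² − t_{22} )]| ≤ C δ. -/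
/-!
After rescaling by `σZ`, put `h x = f (σZ x + b) ^ 2` and `B = σZ⁻¹ A`, so that `BBᵀ` is entrywise
within `δ` of the identity. The covariance equals `q - t₀ t₁` with
`q = E[h((B x)₀) h((B x)₁)]` and `tᵢ = E[h((B x)ᵢ)]`. All three are compared with their values for a pair of independent standard
Gaussians, namely `M²`, `M` and `M`, where `M = E[h(N)]`; each differs from it by `O(δ)`, hence so
does `q - t₀ t₁` from `0`.

The comparison is by densities. The law of `B x` has an explicit density `R` with respect to the
standard Gaussian measure (`integral_comp_mulVec`), and `|R z - 1| ≤ 18 δ exp(|z|²/4)`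
(`abs_densityRatio_sub_one_le`). The weighted integrals of `h` that then bound the error
(`abs_integral_prod_comp_mulVec_sub_le`) are, up to constants, second moments of `f` under a
Gaussian of variance `2 σZ²`, and so are finite (`integrable_mul_exp_sq_div_four`).
-/

open Matrix MeasureTheory ProbabilityTheory

/-! ### The Gaussian density on the plane -/

/-- Lebesgue density of the standard Gaussian measure on `ℝ²`. -/
noncomputable def gaussDensity (x : Fin 2 → ℝ) : ℝ :=
  (2 * Real.pi)⁻¹ * Real.exp (-(x 0 ^ 2 + x 1 ^ 2) / 2)

lemma gaussDensity_pos (x : Fin 2 → ℝ) : 0 < gaussDensity x := by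
  unfold gaussDensity; positivity

lemma measurable_gaussDensity : Measurable gaussDensity := by
  unfold gaussDensity; fun_prop

lemma gaussDensity_eq_prod (x : Fin 2 → ℝ) :
    gaussDensity x = gaussianPDFReal 0 1 (x 0) * gaussianPDFReal 0 1 (x 1) := by
  have h : √(2 * Real.pi) * √(2 * Real.pi) = 2 * Real.pi :=
    Real.mul_self_sqrt (by positivity)
  simp only [gaussDensity, gaussianPDFReal, NNReal.coe_one, mul_one, sub_zero]
  rw [mul_mul_mul_comm, ← mul_inv, h, ← Real.exp_add]
  congr 2; ring

lemma stdGaussPi_eq_withDensity :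
    stdGaussPi 2 = (volume : Measure (Fin 2 → ℝ)).withDensity
      fun x => ENNReal.ofReal (gaussDensity x) := by
  refine Measure.pi_eq fun s hs => ?_
  rw [withDensity_apply _ (MeasurableSet.univ_pi hs), Fin.prod_univ_two,
    gaussianReal_apply _ one_ne_zero, gaussianReal_apply _ one_ne_zero,
    ← lintegral_prod_mul (measurable_gaussianPDF 0 1).aemeasurable
      (measurable_gaussianPDF 0 1).aemeasurable, Measure.prod_restrict]
  rw [← Measure.volume_eq_prod,
    ← (volume_preserving_finTwoArrow ℝ).setLIntegral_comp_preimage_emb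
      (MeasurableEquiv.measurableEmbedding _)]
  have hset : (MeasurableEquiv.finTwoArrow (α := ℝ)) ⁻¹' (s 0 ×ˢ s 1) = Set.univ.pi s := by
    ext x
    simp [MeasurableEquiv.finTwoArrow, Set.mem_pi, Fin.forall_fin_two]
  rw [hset]
  refine lintegral_congr fun x => ?_
  rw [gaussDensity_eq_prod, ENNReal.ofReal_mul (gaussianPDFReal_nonneg _ _ _)]
  rfl

lemma integral_stdGaussPi (F : (Fin 2 → ℝ) → ℝ) :
    ∫ x, F x ∂(stdGaussPi 2) = ∫ x, gaussDensity x * F x := by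
  rw [stdGaussPi_eq_withDensity, integral_withDensity_eq_integral_toReal_smul
    measurable_gaussDensity.ennreal_ofReal (ae_of_all _ fun _ => ENNReal.ofReal_lt_top)]
  simp [ENNReal.toReal_ofReal (gaussDensity_pos _).le]

lemma integrable_stdGaussPi_iff (F : (Fin 2 → ℝ) → ℝ) :
    Integrable F (stdGaussPi 2) ↔ Integrable fun x => gaussDensity x * F x := by
  rw [stdGaussPi_eq_withDensity, integrable_withDensity_iff_integrable_smul'
    measurable_gaussDensity.ennreal_ofReal (ae_of_all _ fun _ => ENNReal.ofReal_lt_top)]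
  simp [ENNReal.toReal_ofReal (gaussDensity_pos _).le]

/-! ### Linear images of the standard Gaussian -/

/-- Density of the law of `B x`, for `x` standard Gaussian, with respect to the standard Gaussian
measure, for invertible `B`. The fraction in the exponent is `zᵀ(BBᵀ)⁻¹z / 2`, with the inverse of
the covariance matrix written out as its adjugate over `det B ^ 2`. -/
noncomputable def densityRatio (B : Matrix (Fin 2) (Fin 2) ℝ) (z : Fin 2 → ℝ) : ℝ :=
  |B.det|⁻¹ * Real.exp ((z 0 ^ 2 + z 1 ^ 2) / 2 -
    ((B * Bᵀ) 1 1 * z 0 ^ 2 - 2 * (B * Bᵀ) 0 1 * (z 0 * z 1) + (B * Bᵀ) 0 0 * z 1 ^ 2)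
      / (2 * B.det ^ 2))

lemma measurable_densityRatio (B : Matrix (Fin 2) (Fin 2) ℝ) : Measurable (densityRatio B) := by
  unfold densityRatio; fun_prop

/-- Pointwise form of the change of variables `z = B x`; it amounts to `zᵀ(BBᵀ)⁻¹z = |x|²`. -/
lemma gaussDensity_eq (B : Matrix (Fin 2) (Fin 2) ℝ) (hB : B.det ≠ 0) (x : Fin 2 → ℝ) :
    gaussDensity x =
      |B.det| * (gaussDensity (B *ᵥ x) * densityRatio B (B *ᵥ x)) := by
  have habs : |B.det| ≠ 0 := abs_ne_zero.2 hB
  have key : (x 0 ^ 2 + x 1 ^ 2) = ((B * Bᵀ) 1 1 * (B *ᵥ x) 0 ^ 2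
      - 2 * (B * Bᵀ) 0 1 * ((B *ᵥ x) 0 * (B *ᵥ x) 1) + (B * Bᵀ) 0 0 * (B *ᵥ x) 1 ^ 2)
      / B.det ^ 2 := by
    rw [eq_div_iff (pow_ne_zero 2 hB)]
    simp [Matrix.mulVec, dotProduct, Matrix.mul_apply, Fin.sum_univ_two, Matrix.det_fin_two]
    ring
  unfold densityRatio gaussDensity
  rw [key]
  set z := B *ᵥ x
  rw [show ∀ m c e₁ e₂ : ℝ, m * (c * e₁ * (m⁻¹ * e₂)) = m * m⁻¹ * (c * (e₁ * e₂)) by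
    intros; ring, mul_inv_cancel₀ habs, one_mul, ← Real.exp_add]
  congr 2
  rw [← div_div _ _ (B.det ^ 2), div_right_comm _ 2 (B.det ^ 2)]
  ring

lemma measurableEmbedding_toLin' (B : Matrix (Fin 2) (Fin 2) ℝ) (hB : B.det ≠ 0) :
    MeasurableEmbedding (toLin' B) := by
  refine Continuous.measurableEmbedding (LinearMap.continuous_on_pi _) ?_
  have : IsUnit B := (Matrix.isUnit_iff_isUnit_det B).2 (isUnit_iff_ne_zero.2 hB)
  intro x y h
  exact Matrix.mulVec_injective_of_isUnit this (by simpa using h)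

lemma integral_comp_mulVec_s15 (B : Matrix (Fin 2) (Fin 2) ℝ) (hB : B.det ≠ 0)
    (F : (Fin 2 → ℝ) → ℝ) :
    ∫ x, F (B *ᵥ x) ∂(stdGaussPi 2) = ∫ z, densityRatio B z * F z ∂(stdGaussPi 2) := by
  have habs : |B.det| ≠ 0 := abs_ne_zero.2 hB
  rw [integral_stdGaussPi, integral_stdGaussPi]
  have h1 : ∀ x, gaussDensity x * F (B *ᵥ x) =
      |B.det| * (fun z => gaussDensity z * (densityRatio B z * F z)) (toLin' B x) := by
    intro x
    rw [gaussDensity_eq B hB x, Matrix.toLin'_apply]; ring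
  simp_rw [h1]
  rw [integral_const_mul, ← (measurableEmbedding_toLin' B hB).integral_map
      (fun z => gaussDensity z * (densityRatio B z * F z)),
    Real.map_matrix_volume_pi_eq_smul_volume_pi hB, integral_smul_measure,
    ENNReal.toReal_ofReal (abs_nonneg _), abs_inv, smul_eq_mul, ← mul_assoc,
    mul_inv_cancel₀ habs, one_mul]

lemma integrable_comp_mulVec (B : Matrix (Fin 2) (Fin 2) ℝ) (hB : B.det ≠ 0)
    (F : (Fin 2 → ℝ) → ℝ) (hF : Integrable (fun z => densityRatio B z * F z) (stdGaussPi 2)) :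
    Integrable (fun x => F (B *ᵥ x)) (stdGaussPi 2) := by
  rw [integrable_stdGaussPi_iff] at hF ⊢
  have h1 : (fun x => gaussDensity x * F (B *ᵥ x)) = fun x =>
      |B.det| * ((fun z => gaussDensity z * (densityRatio B z * F z)) ∘ (toLin' B)) x := by
    ext x
    rw [gaussDensity_eq B hB x, Function.comp_apply, Matrix.toLin'_apply]; ring
  rw [h1]
  refine Integrable.const_mul ?_ _
  rw [← (measurableEmbedding_toLin' B hB).integrable_map_iff,
    Real.map_matrix_volume_pi_eq_smul_volume_pi hB]
  exact hF.smul_measure ENNReal.ofReal_ne_top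

/-! ### Estimate of the density ratio -/

/-- The weight `exp(|z|²/4)` dominating the first-order perturbation of the density; against it a
Gaussian of variance `1` becomes a multiple of a Gaussian of variance `2`. -/
noncomputable def gaussWeight (z : Fin 2 → ℝ) : ℝ := Real.exp ((z 0 ^ 2 + z 1 ^ 2) / 4)

lemma one_le_gaussWeight (z : Fin 2 → ℝ) : 1 ≤ gaussWeight z :=
  Real.one_le_exp (by positivity)

lemma abs_exp_sub_one_le_mul_exp (u : ℝ) : |Real.exp u - 1| ≤ |u| * Real.exp |u| := by
  have a3 : Real.exp u * Real.exp (-u) = 1 := by rw [← Real.exp_add]; simp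
  rcases le_total 0 u with h | h
  · rw [abs_of_nonneg h, abs_of_nonneg (by linarith [Real.one_le_exp h])]
    have := mul_le_mul_of_nonneg_left (Real.add_one_le_exp (-u)) (Real.exp_pos u).le
    linarith
  · rw [abs_of_nonpos (by linarith [Real.exp_le_one_iff.2 h] : Real.exp u - 1 ≤ 0)]
    have := le_mul_of_one_le_right (abs_nonneg u) (Real.one_le_exp (abs_nonneg u))
    linarith [Real.add_one_le_exp u, abs_of_nonpos h]

/-- If the covariance matrix `BBᵀ` is entrywise `δ`-close to the identity, the density ratio is
`δ`-close to `1` up to a Gaussian weight. The exponent is `O(δ |z|²)`, with a constant small enough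
for `δ ≤ 1/10` that the weight stays integrable against the standard Gaussian. -/
lemma abs_densityRatio_sub_one_le {δ ε₁ ε₂ ρ : ℝ} (hδ : 0 < δ) (hδ' : δ ≤ 1 / 10)
    (h₁ : |ε₁| ≤ δ) (h₂ : |ε₂| ≤ δ) (hρ : |ρ| ≤ δ) (B : Matrix (Fin 2) (Fin 2) ℝ)
    (h00 : (B * Bᵀ) 0 0 = 1 + ε₁) (h11 : (B * Bᵀ) 1 1 = 1 + ε₂) (h01 : (B * Bᵀ) 0 1 = ρ) :
    B.det ≠ 0 ∧ ∀ z : Fin 2 → ℝ,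
      |densityRatio B z - 1| ≤ 18 * δ * gaussWeight z := by
  have hD : B.det ^ 2 = (1 + ε₁) * (1 + ε₂) - ρ ^ 2 := by
    rw [← h00, ← h11, ← h01]
    simp [Matrix.mul_apply, Fin.sum_univ_two, Matrix.det_fin_two]
    ring
  have hε₁ : |ε₁| ≤ 1 / 10 := h₁.trans hδ'
  have hε₂ : |ε₂| ≤ 1 / 10 := h₂.trans hδ'
  have hρ2 : ρ ^ 2 ≤ δ / 10 := by
    rw [← sq_abs]; nlinarith [abs_nonneg ρ]
  have hεε : |ε₁ * ε₂| ≤ δ / 10 := by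
    rw [abs_mul]; nlinarith [abs_nonneg ε₁, abs_nonneg ε₂]
  have hρ0 := sq_nonneg ρ
  -- `δ ≤ 1/10` keeps the determinant of the covariance matrix away from `0`.
  have hDlow : 4 / 5 ≤ B.det ^ 2 := by
    rw [hD]
    rw [abs_le] at hε₁ hε₂
    nlinarith
  have hD1 : |B.det ^ 2 - 1| ≤ 11 / 5 * δ := by
    rw [hD]
    rw [abs_le] at h₁ h₂ hεε ⊢
    constructor <;> linarith [h₁.1, h₁.2, h₂.1, h₂.2, hεε.1, hεε.2]
  have hB : B.det ≠ 0 := by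
    intro h; rw [h] at hDlow; norm_num at hDlow
  refine ⟨hB, fun z => ?_⟩
  unfold densityRatio gaussWeight
  rw [h00, h11, h01]
  set m := |B.det| with hm
  have hm2 : m ^ 2 = B.det ^ 2 := sq_abs _
  have hmpos : 0 < m := abs_pos.2 hB
  rw [← hm2] at hDlow hD1 hD ⊢
  set D := m ^ 2 with hDdef
  have hDpos : 0 < D := by positivity
  set S := z 0 ^ 2 + z 1 ^ 2 with hS
  have hS0 : 0 ≤ S := by positivity
  set u := S / 2 - ((1 + ε₂) * z 0 ^ 2 - 2 * ρ * (z 0 * z 1) + (1 + ε₁) * z 1 ^ 2) / (2 * D)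
    with hu
  have hu' : u = ((ε₁ + ε₁ * ε₂ - ρ ^ 2) * z 0 ^ 2 + 2 * ρ * (z 0 * z 1)
      + (ε₂ + ε₁ * ε₂ - ρ ^ 2) * z 1 ^ 2) / (2 * D) := by
    rw [hu, eq_div_iff (by positivity), sub_mul, div_mul_cancel₀ _ (by positivity), hS, hD]
    ring
  have hub : |u| ≤ 3 / 2 * δ * S := by
    have hz : |2 * ρ * (z 0 * z 1)| ≤ δ * S := by
      have : |2 * (z 0 * z 1)| ≤ S := by
        rw [abs_le]
        constructor <;> nlinarith [sq_nonneg (z 0 + z 1), sq_nonneg (z 0 - z 1)]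
      calc |2 * ρ * (z 0 * z 1)| = |ρ| * |2 * (z 0 * z 1)| := by rw [← abs_mul]; congr 1; ring
        _ ≤ δ * S := by gcongr
    have hdiag : ∀ e w : ℝ, |e| ≤ δ → 0 ≤ w → |(e + ε₁ * ε₂ - ρ ^ 2) * w| ≤ 6 / 5 * δ * w := by
      intro e w he hw
      rw [abs_mul, abs_of_nonneg hw]
      gcongr
      rw [abs_le] at he hεε ⊢
      constructor <;> linarith [he.1, he.2, hεε.1, hεε.2]
    rw [hu', abs_div, abs_of_pos (by positivity : 0 < 2 * D), div_le_iff₀ (by positivity)]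
    calc _ ≤ 6 / 5 * δ * z 0 ^ 2 + δ * S + 6 / 5 * δ * z 1 ^ 2 :=
          (abs_add_three _ _ _).trans (add_le_add_three (hdiag _ _ h₁ (sq_nonneg _)) hz
            (hdiag _ _ h₂ (sq_nonneg _)))
      _ = 11 / 5 * (δ * S) := by rw [hS]; ring
      _ ≤ 3 * D * (δ * S) := by gcongr; linarith
      _ = _ := by ring
  have hub' : |u| ≤ 3 / 20 * S := hub.trans (by nlinarith)
  have hmi : |m⁻¹ - 1| ≤ 3 * δ := by
    have e : m⁻¹ - 1 = - (D - 1) / (m * (1 + m)) := by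
      rw [hDdef]; field_simp; ring
    rw [e, abs_div, abs_neg, abs_of_pos (by positivity : 0 < m * (1 + m)),
      div_le_iff₀ (by positivity)]
    nlinarith
  have hexp := abs_exp_sub_one_le_mul_exp u
  have hS10 : S ≤ 10 * Real.exp (S / 10) := by linarith [Real.add_one_le_exp (S / 10)]
  have hS1 : 1 ≤ Real.exp (S / 10) := Real.one_le_exp (by positivity)
  have hsplit : m⁻¹ * Real.exp u - 1 = (m⁻¹ - 1) * Real.exp u + (Real.exp u - 1) := by ring
  have hE : Real.exp |u| ≤ Real.exp (3 / 20 * S) := Real.exp_le_exp.2 hub'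
  calc |m⁻¹ * Real.exp u - 1|
      ≤ |m⁻¹ - 1| * Real.exp u + |Real.exp u - 1| := by
        rw [hsplit]
        refine (abs_add_le _ _).trans ?_
        rw [abs_mul, abs_of_pos (Real.exp_pos u)]
    _ ≤ 3 * δ * Real.exp |u| + 3 / 2 * δ * S * Real.exp |u| := by
        refine add_le_add ?_ (hexp.trans (by gcongr))
        gcongr
        exact le_abs_self u
    _ = δ * (3 + 3 / 2 * S) * Real.exp |u| := by ring
    _ ≤ δ * (18 * Real.exp (S / 10)) * Real.exp (3 / 20 * S) := by
        gcongr
        linarith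
    _ = 18 * δ * Real.exp (S / 4) := by
        rw [show S / 4 = S / 10 + 3 / 20 * S by ring, Real.exp_add]; ring

/-! ### Comparison of expectations -/

/-- Replacing the law of `B x` by the standard Gaussian changes the expectation of `F` by at most
`O(δ)` times the weighted `L¹` norm of `F`. -/
lemma abs_integral_comp_mulVec_sub_le {δ : ℝ} (B : Matrix (Fin 2) (Fin 2) ℝ)
    (hB : B.det ≠ 0) (hR : ∀ z, |densityRatio B z - 1| ≤ 18 * δ * gaussWeight z)
    (F : (Fin 2 → ℝ) → ℝ) (hF : Measurable F)
    (hFw : Integrable (fun z => F z * gaussWeight z) (stdGaussPi 2)) :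
    Integrable (fun x => F (B *ᵥ x)) (stdGaussPi 2) ∧
    |∫ x, F (B *ᵥ x) ∂(stdGaussPi 2) - ∫ z, F z ∂(stdGaussPi 2)| ≤
      18 * δ * ∫ z, |F z * gaussWeight z| ∂(stdGaussPi 2) := by
  have hw0 : ∀ z, 0 ≤ gaussWeight z := fun z => zero_le_one.trans (one_le_gaussWeight z)
  have hFi : Integrable F (stdGaussPi 2) := by
    refine hFw.mono hF.aestronglyMeasurable (ae_of_all _ fun z => ?_)
    rw [norm_mul, Real.norm_of_nonneg (hw0 z)]
    exact le_mul_of_one_le_right (norm_nonneg _) (one_le_gaussWeight z)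
  have hpt : ∀ z, |(densityRatio B z - 1) * F z| ≤ 18 * δ * |F z * gaussWeight z| := by
    intro z
    rw [abs_mul, abs_mul, abs_of_nonneg (hw0 z), mul_comm |F z| (gaussWeight z), ← mul_assoc]
    exact mul_le_mul_of_nonneg_right (hR z) (abs_nonneg _)
  have hdom : Integrable (fun z => 18 * δ * |F z * gaussWeight z|) (stdGaussPi 2) :=
    hFw.abs.const_mul _
  have hd : Integrable (fun z => (densityRatio B z - 1) * F z) (stdGaussPi 2) :=
    hdom.mono' (((measurable_densityRatio B).sub_const 1).mul hF).aestronglyMeasurable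
      (ae_of_all _ hpt)
  have hRF : Integrable (fun z => densityRatio B z * F z) (stdGaussPi 2) := by
    refine (hd.add hFi).congr (ae_of_all _ fun z => ?_)
    simp only [Pi.add_apply]; ring
  refine ⟨integrable_comp_mulVec B hB F hRF, ?_⟩
  rw [integral_comp_mulVec_s15 B hB, ← integral_sub hRF hFi, ← integral_const_mul]
  refine (abs_integral_le_integral_abs).trans (integral_mono ?_ hdom fun z => ?_)
  · exact (hRF.sub hFi).abs
  · have := hpt z
    rwa [sub_mul, one_mul] at this

/-- Multiplying the standard Gaussian density by `exp(x²/4)` yields, up to a constant, the density of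
`√2` times a standard Gaussian. -/
lemma integrable_mul_exp_sq_div_four (h : ℝ → ℝ)
    (hh : Integrable (fun x => h (√2 * x)) (gaussianReal 0 1)) :
    Integrable (fun x => h x * Real.exp (x ^ 2 / 4)) (gaussianReal 0 1) := by
  have h2 : √2 ≠ 0 := by positivity
  have hiff : ∀ g : ℝ → ℝ, Integrable g (gaussianReal 0 1) ↔
      Integrable fun x => gaussianPDFReal 0 1 x * g x := by
    intro g
    rw [gaussianReal_of_var_ne_zero _ one_ne_zero, integrable_withDensity_iff_integrable_smul'
      (measurable_gaussianPDF 0 1) (ae_of_all _ fun _ => gaussianPDF_lt_top)]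
    simp [toReal_gaussianPDF]
  rw [hiff] at hh ⊢
  rw [← integrable_comp_mul_left_iff _ h2]
  refine hh.congr (ae_of_all _ fun x => ?_)
  simp only [gaussianPDFReal, NNReal.coe_one, mul_one, sub_zero]
  rw [show ∀ c e₁ e₂ t : ℝ, c * e₁ * (t * e₂) = c * (e₁ * e₂) * t by intros; ring,
    ← Real.exp_add, mul_pow, Real.sq_sqrt (by norm_num : (0 : ℝ) ≤ 2)]
  congr 3
  ring

instance : IsProbabilityMeasure (stdGaussPi 2) := by
  unfold stdGaussPi; infer_instance

lemma integrable_prod_stdGaussPi {g k : ℝ → ℝ} (hg : Integrable g (gaussianReal 0 1))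
    (hk : Integrable k (gaussianReal 0 1)) :
    Integrable (fun z : Fin 2 → ℝ => g (z 0) * k (z 1)) (stdGaussPi 2) := by
  have := Integrable.fintype_prod (ι := Fin 2) (f := ![g, k])
    (μ := fun _ => gaussianReal 0 1) (by simp [Fin.forall_fin_two, hg, hk])
  simpa [Fin.prod_univ_two, stdGaussPi] using this

lemma integral_prod_stdGaussPi (g k : ℝ → ℝ) :
    ∫ z : Fin 2 → ℝ, g (z 0) * k (z 1) ∂(stdGaussPi 2) =
      (∫ x, g x ∂(gaussianReal 0 1)) * ∫ x, k x ∂(gaussianReal 0 1) := by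
  have := integral_fintype_prod_eq_prod (ι := Fin 2) (![g, k])
    (μ := fun _ => gaussianReal 0 1)
  simpa [Fin.prod_univ_two, stdGaussPi] using this

/-- Specialization to products `g(z₀) k(z₁)`, for which both the limiting expectation and the error
term factorize over the coordinates. -/
lemma abs_integral_prod_comp_mulVec_sub_le {δ : ℝ} (B : Matrix (Fin 2) (Fin 2) ℝ)
    (hB : B.det ≠ 0) (hR : ∀ z, |densityRatio B z - 1| ≤ 18 * δ * gaussWeight z)
    {g k : ℝ → ℝ} (hg : Measurable g) (hk : Measurable k)
    (hgi : Integrable (fun x => g (√2 * x)) (gaussianReal 0 1))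
    (hki : Integrable (fun x => k (√2 * x)) (gaussianReal 0 1))
    (hg0 : ∀ x, 0 ≤ g x) (hk0 : ∀ x, 0 ≤ k x) :
    Integrable (fun x => g ((B *ᵥ x) 0) * k ((B *ᵥ x) 1)) (stdGaussPi 2) ∧
    |∫ x, g ((B *ᵥ x) 0) * k ((B *ᵥ x) 1) ∂(stdGaussPi 2) -
        (∫ x, g x ∂(gaussianReal 0 1)) * ∫ x, k x ∂(gaussianReal 0 1)| ≤
      18 * δ * ((∫ x, g x * Real.exp (x ^ 2 / 4) ∂(gaussianReal 0 1)) *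
        ∫ x, k x * Real.exp (x ^ 2 / 4) ∂(gaussianReal 0 1)) := by
  have hw : ∀ z : Fin 2 → ℝ, g (z 0) * k (z 1) * gaussWeight z =
      (g (z 0) * Real.exp (z 0 ^ 2 / 4)) * (k (z 1) * Real.exp (z 1 ^ 2 / 4)) := by
    intro z
    rw [gaussWeight, add_div, Real.exp_add]; ring
  have := abs_integral_comp_mulVec_sub_le B hB hR (fun z => g (z 0) * k (z 1))
    (by fun_prop) (by
      simp_rw [hw]
      exact integrable_prod_stdGaussPi (integrable_mul_exp_sq_div_four g hgi)
        (integrable_mul_exp_sq_div_four k hki))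
  refine ⟨this.1, ?_⟩
  rw [← integral_prod_stdGaussPi, ← integral_prod_stdGaussPi]
  refine this.2.trans_eq ?_
  congr 2
  ext z
  rw [← hw, abs_of_nonneg]
  exact mul_nonneg (mul_nonneg (hg0 _) (hk0 _)) (Real.exp_pos _).le

/-! ### The covariance bound -/

/-- covariance bound for two squared feature entries in distinct
columns.  For any centered jointly Gaussian pair `(N₁, N₂)` (realized as
`N_i = (A x)_i` for standard Gaussian `x`) with `Var(N_i) = σ_Z²(1+ε_i)`,
`Cov(N₁,N₂) = σ_Z² ρ`, `|ε₁|,|ε₂|,|ρ| ≤ δ ≤ 1/10`, and `f` with finite Gaussian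
moments up to order 4 and `E[f(σ_Z N + b)] = 0`,
`|E[(f(N₁+b)² − t₁₁)(f(N₂+b)² − t₂₂)]| ≤ C δ`. -/
theorem covariance_bound_square_vs_square
    (σZ : ℝ) (hσZ : 0 < σZ) (b : ℝ) (f : ℝ → ℝ) (hf : Measurable f)
    (hmom : ∀ σ : ℝ, 0 < σ → ∀ k : ℕ, 1 ≤ k → k ≤ 4 →
      Integrable (fun x => |f (σ * x + b)| ^ k) (gaussianReal 0 1))
    (hcen : ∫ x, f (σZ * x + b) ∂(gaussianReal 0 1) = 0) :
    ∃ C : ℝ, ∀ δ : ℝ, 0 < δ → δ ≤ 1 / 10 →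
      ∀ ε₁ ε₂ ρ : ℝ, |ε₁| ≤ δ → |ε₂| ≤ δ → |ρ| ≤ δ →
      ∀ A : Matrix (Fin 2) (Fin 2) ℝ,
        (A * Aᵀ) 0 0 = σZ ^ 2 * (1 + ε₁) →
        (A * Aᵀ) 1 1 = σZ ^ 2 * (1 + ε₂) →
        (A * Aᵀ) 0 1 = σZ ^ 2 * ρ →
        |∫ x, ((f (A.mulVec x 0 + b)) ^ 2
                - ∫ y, (f (A.mulVec y 0 + b)) ^ 2 ∂(stdGaussPi 2))
             * ((f (A.mulVec x 1 + b)) ^ 2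
                - ∫ y, (f (A.mulVec y 1 + b)) ^ 2 ∂(stdGaussPi 2))
           ∂(stdGaussPi 2)|
          ≤ C * δ := by
  -- Rescaling by `σZ` reduces to a covariance matrix close to the identity.
  set h : ℝ → ℝ := fun x => f (σZ * x + b) ^ 2 with hh
  have hm : Measurable h := by fun_prop
  have h0 : ∀ x, 0 ≤ h x := fun x => sq_nonneg _
  have hi : Integrable (fun x => h (√2 * x)) (gaussianReal 0 1) := by
    refine (hmom (σZ * √2) (by positivity) 2 (by norm_num) (by norm_num)).congr
      (ae_of_all _ fun x => ?_)
    simp [hh, mul_assoc]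
  have h1i : Integrable (fun x => (fun _ : ℝ => (1 : ℝ)) (√2 * x)) (gaussianReal 0 1) :=
    integrable_const _
  set M := ∫ x, h x ∂(gaussianReal 0 1) with hM
  set J := ∫ x, h x * Real.exp (x ^ 2 / 4) ∂(gaussianReal 0 1) with hJ
  set I := ∫ x, (1 : ℝ) * Real.exp (x ^ 2 / 4) ∂(gaussianReal 0 1) with hI
  have hM0 : 0 ≤ M := integral_nonneg h0
  have hJ0 : 0 ≤ J := integral_nonneg fun x => mul_nonneg (h0 x) (Real.exp_pos _).le
  have hI0 : 0 ≤ I := integral_nonneg fun x => by positivity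
  -- From `q = M² + O(δ)`, `tᵢ = M + O(δ)` with error constants `18 J²` and `18 J I`.
  refine ⟨18 * (J * J) + 18 * (J * I) * (2 * M + 18 * (J * I)), ?_⟩
  intro δ hδ hδ' ε₁ ε₂ ρ hε₁ hε₂ hρ A hA00 hA11 hA01
  set B : Matrix (Fin 2) (Fin 2) ℝ := σZ⁻¹ • A with hBdef
  have hAB : ∀ x i, A.mulVec x i = σZ * (B *ᵥ x) i := by
    intro x i
    simp [hBdef, Matrix.smul_mulVec, hσZ.ne']
  have hBB : ∀ i j c, (A * Aᵀ) i j = σZ ^ 2 * c → (B * Bᵀ) i j = c := by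
    intro i j c hc
    simp only [hBdef, Matrix.transpose_smul, Matrix.smul_mul, Matrix.mul_smul, Matrix.smul_apply,
      smul_eq_mul, hc]
    field_simp
  obtain ⟨hB, hR⟩ := abs_densityRatio_sub_one_le hδ hδ' hε₁ hε₂ hρ B (hBB _ _ _ hA00)
    (hBB _ _ _ hA11) (hBB _ _ _ hA01)
  obtain ⟨i01, b01⟩ := abs_integral_prod_comp_mulVec_sub_le B hB hR hm hm hi hi h0 h0
  obtain ⟨i0, b0⟩ := abs_integral_prod_comp_mulVec_sub_le B hB hR hm measurable_const hi h1i
    h0 fun _ => zero_le_one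
  obtain ⟨i1, b1⟩ := abs_integral_prod_comp_mulVec_sub_le B hB hR measurable_const hm h1i hi
    (fun _ => zero_le_one) h0
  simp only [mul_one, one_mul, integral_const, probReal_univ, smul_eq_mul] at i0 b0 i1 b1
  simp only [one_mul] at hI
  rw [← hI, ← hJ, ← hM] at b0 b1
  rw [← hJ, ← hM] at b01
  simp only [hAB]
  change |∫ x, (h ((B *ᵥ x) 0) - ∫ y, h ((B *ᵥ y) 0) ∂(stdGaussPi 2)) *
    (h ((B *ᵥ x) 1) - ∫ y, h ((B *ᵥ y) 1) ∂(stdGaussPi 2)) ∂(stdGaussPi 2)| ≤ _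
  set t₀ := ∫ y, h ((B *ᵥ y) 0) ∂(stdGaussPi 2) with ht₀
  set t₁ := ∫ y, h ((B *ᵥ y) 1) ∂(stdGaussPi 2) with ht₁
  set q := ∫ x, h ((B *ᵥ x) 0) * h ((B *ᵥ x) 1) ∂(stdGaussPi 2) with hq
  have hcov : ∫ x, (h ((B *ᵥ x) 0) - t₀) * (h ((B *ᵥ x) 1) - t₁) ∂(stdGaussPi 2)
      = q - t₀ * t₁ := by
    have e : ∀ x, (h ((B *ᵥ x) 0) - t₀) * (h ((B *ᵥ x) 1) - t₁) =
        h ((B *ᵥ x) 0) * h ((B *ᵥ x) 1) - t₁ * h ((B *ᵥ x) 0) - t₀ * h ((B *ᵥ x) 1)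
          + t₀ * t₁ := by intro x; ring
    simp_rw [e]
    have j0 : Integrable (fun x => t₁ * h ((B *ᵥ x) 0)) (stdGaussPi 2) := i0.const_mul _
    have j1 : Integrable (fun x => t₀ * h ((B *ᵥ x) 1)) (stdGaussPi 2) := i1.const_mul _
    have j01 : Integrable (fun x => h ((B *ᵥ x) 0) * h ((B *ᵥ x) 1) - t₁ * h ((B *ᵥ x) 0))
        (stdGaussPi 2) := i01.sub j0
    have j : Integrable (fun x => h ((B *ᵥ x) 0) * h ((B *ᵥ x) 1) - t₁ * h ((B *ᵥ x) 0)
        - t₀ * h ((B *ᵥ x) 1)) (stdGaussPi 2) := j01.sub j1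
    rw [integral_add j (integrable_const _), integral_sub j01 j1, integral_sub i01 j0,
      integral_const_mul, integral_const_mul, ← ht₀, ← ht₁, ← hq, integral_const,
      probReal_univ, one_smul]
    ring
  rw [hcov]
  have hJI : 0 ≤ J * I := mul_nonneg hJ0 hI0
  rw [mul_comm I J] at b1
  have ht₁b : |t₁| ≤ M + 18 * (J * I) := by
    have e : t₁ = (t₁ - M) + M := by ring
    rw [e]
    refine (abs_add_le _ _).trans ?_
    rw [abs_of_nonneg hM0]
    nlinarith
  calc |q - t₀ * t₁| = |(q - M * M) + (-(t₀ - M) * t₁ + -M * (t₁ - M))| := by congr 1; ring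
    _ ≤ |q - M * M| + (|t₀ - M| * |t₁| + M * |t₁ - M|) := by
        refine (abs_add_le _ _).trans (add_le_add le_rfl ((abs_add_le _ _).trans ?_))
        rw [abs_mul, abs_mul, abs_neg, abs_neg, abs_of_nonneg hM0]
    _ ≤ 18 * δ * (J * J) + (18 * δ * (J * I) * (M + 18 * (J * I)) + M * (18 * δ * (J * I))) := by
        gcongr
    _ = _ := by ring
end
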